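/- arXiv:2503.22440 — 2 statements merged into one kernel-verified Lean document; each statement's English description precedes it below -/
import Mathlib

section
/- Let f = (f₁, f₂) : S¹ ⊔ S¹ ↪ ℝ³ be a smooth 2-component link whose diagram (the projection pr₁₂∘f with over/under data) has only transverse double crossings, and let h : S¹ × S¹ → S² be given by h(x₁,x₂) = (f₂(x₂)−f₁(x₁))/|f₂(x₂)−f₁(x₁)|. Then for every η as specified, ∫_{S¹×S¹} h*η equals the linking number lk(f₁,f₂) (the mapping degree of h), and for all sufficiently small ε > 0 this integral equals the sum of the signs of those crossings of the diagram at which f₂ passes over f₁. -/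
open MeasureTheory Filter Topology Set

noncomputable section

abbrev E2 : Type := EuclideanSpace ℝ (Fin 2)
abbrev E3 : Type := EuclideanSpace ℝ (Fin 3)
abbrev E4 : Type := EuclideanSpace ℝ (Fin 4)
abbrev E6 : Type := EuclideanSpace ℝ (Fin 6)

/-- The point of `ℝ³` with the given coordinates. -/
def mk3 (x y z : ℝ) : E3 := (WithLp.equiv 2 (Fin 3 → ℝ)).symm ![x, y, z]

/-- The north pole `N = (0,0,1)` of `S² ⊆ ℝ³`. -/
def NP : E3 := mk3 0 0 1

/-- Projection of `ℝ³` onto the plane `N^⊥` (the first two coordinates). -/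
def pr12 (v : E3) : ℝ × ℝ := (v 0, v 1)

/-- The `N`-coordinate. -/
def pr3 (v : E3) : ℝ := v 2

/-- `unitv v = v / ‖v‖`. -/
def unitv (v : E3) : E3 := ‖v‖⁻¹ • v

/-- Determinant of the projections to `N^⊥` of two vectors (first vector, then second). -/
def cross2 (a b : E3) : ℝ := a 0 * b 1 - a 1 * b 0

/-- 3×3 determinant (scalar triple product); for `p ∈ S²` and `v, w` tangent to `S²` at
`p`, this is the value of the standard area form of `S²` at `p` on `(v, w)`. -/
def det3 (p v w : E3) : ℝ :=
  p 0 * (v 1 * w 2 - v 2 * w 1) - p 1 * (v 0 * w 2 - v 2 * w 0) +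
    p 2 * (v 0 * w 1 - v 1 * w 0)

/-! ### Long knots and 3-component long links -/

/-- A long knot: a smooth embedding `ℝ ↪ ℝ³` which is standard outside `[-1,1]`. -/
def IsLongKnot (f : ℝ → E3) : Prop :=
  ContDiff ℝ (⊤ : ℕ∞) f ∧ Function.Injective f ∧ (∀ t, deriv f t ≠ 0) ∧
    ∀ x : ℝ, 1 ≤ |x| → f x = mk3 x 0 0

/-- Smooth isotopy of long knots. -/
def KnotIsotopic (f₀ f₁ : ℝ → E3) : Prop :=
  ∃ H : ℝ → ℝ → E3,
    ContDiff ℝ (⊤ : ℕ∞) (fun p : ℝ × ℝ => H p.1 p.2) ∧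
    (∀ s, IsLongKnot (H s)) ∧ H 0 = f₀ ∧ H 1 = f₁

/-- A 3-component long link: a smooth embedding `ℝ ⊔ ℝ ⊔ ℝ ↪ ℝ³`, standard outside
`[-1,1]`, component `k` (for `k = 1,2,3`, i.e. index `i = k - 1 : Fin 3`) having ends
`x ↦ (x, (2 - k)|x|, 0)`. -/
def IsLongLink3 (f : Fin 3 → ℝ → E3) : Prop :=
  (∀ i, ContDiff ℝ (⊤ : ℕ∞) (f i)) ∧
  (∀ i j s t, f i s = f j t → i = j ∧ s = t) ∧
  (∀ i t, deriv (f i) t ≠ 0) ∧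
  ∀ i (x : ℝ), 1 ≤ |x| → f i x = mk3 x ((1 - ((i : ℕ) : ℝ)) * |x|) 0

/-- Smooth isotopy of 3-component long links. -/
def LinkIsotopic (f₀ f₁ : Fin 3 → ℝ → E3) : Prop :=
  ∃ H : ℝ → Fin 3 → ℝ → E3,
    (∀ i, ContDiff ℝ (⊤ : ℕ∞) (fun p : ℝ × ℝ => H p.1 i p.2)) ∧
    (∀ s, IsLongLink3 (H s)) ∧ H 0 = f₀ ∧ H 1 = f₁

/-! ### Diagrams, crossings and Gauss diagram pairings -/

/-- All self-intersections of the projection of the long knot `f` are transverse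
(any two branches meeting at a multiple point have independent projected tangents). -/
def TransverseK (f : ℝ → E3) : Prop :=
  ∀ t u, t ≠ u → pr12 (f t) = pr12 (f u) → cross2 (deriv f t) (deriv f u) ≠ 0

/-- The diagram of `f` has only transverse double points. -/
def OnlyDoubleK (f : ℝ → E3) : Prop :=
  TransverseK f ∧
  ∀ t u v : ℝ, t ≠ u → u ≠ v → t ≠ v →
    pr12 (f t) = pr12 (f u) → pr12 (f u) = pr12 (f v) → False

/-- All self-intersections of the projection of the long link `f` are transverse. -/
def TransverseL (f : Fin 3 → ℝ → E3) : Prop :=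
  ∀ i j s t, (i, s) ≠ (j, t) → pr12 (f i s) = pr12 (f j t) →
    cross2 (deriv (f i) s) (deriv (f j) t) ≠ 0

/-- The diagram of the long link `f` has only transverse double points. -/
def OnlyDoubleL (f : Fin 3 → ℝ → E3) : Prop :=
  TransverseL f ∧
  ∀ i j k s t u, (i, s) ≠ (j, t) → (j, t) ≠ (k, u) → (i, s) ≠ (k, u) →
    pr12 (f i s) = pr12 (f j t) → pr12 (f j t) = pr12 (f k u) → False

/-- Crossings of a long knot diagram: pairs `(t, u)` with `t` on the lower and `u` on the
upper strand; the corresponding chord of the Gauss diagram is directed from `t` to `u`. -/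
def CrossingK (f : ℝ → E3) : Set (ℝ × ℝ) :=
  {p | p.1 ≠ p.2 ∧ pr12 (f p.1) = pr12 (f p.2) ∧ pr3 (f p.1) < pr3 (f p.2)}

/-- The sign of the crossing `p = (t, u)` (`+1` iff the projected tangent of the
over-strand followed by that of the under-strand is a positive basis of `N^⊥`). -/
def csignK (f : ℝ → E3) (p : ℝ × ℝ) : ℝ :=
  Real.sign (cross2 (deriv f p.2) (deriv f p.1))

/-- Gauss diagram pairing for a long knot: the sum, over all pairs of chords of the Gauss
diagram of `f` in the relative position prescribed by `R`, of the products of signs. -/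
def pairK (f : ℝ → E3) (R : ℝ × ℝ → ℝ × ℝ → Prop) : ℝ :=
  ∑ᶠ q ∈ {q : (ℝ × ℝ) × (ℝ × ℝ) | q.1 ∈ CrossingK f ∧ q.2 ∈ CrossingK f ∧ R q.1 q.2},
    csignK f q.1 * csignK f q.2

/-- `⟨X, G_D⟩` : chords `x₁ → x₃` and `x₄ → x₂` with `x₁ < x₂ < x₃ < x₄`. -/
def pairXK (f : ℝ → E3) : ℝ :=
  pairK f fun p q => p.1 < q.2 ∧ q.2 < p.2 ∧ p.2 < q.1

/-- `⟨X′₁, G_D⟩` : chords `a → b` and `c → a` with `a < b < c`. -/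
def pairX1K (f : ℝ → E3) : ℝ :=
  pairK f fun p q => q.2 = p.1 ∧ p.1 < p.2 ∧ p.2 < q.1

/-- `⟨X′₂, G_D⟩` : chords `a → b` and `c → b` with `a < b < c`. -/
def pairX2K (f : ℝ → E3) : ℝ :=
  pairK f fun p q => q.2 = p.2 ∧ p.1 < p.2 ∧ p.2 < q.1

/-- `⟨X′₃, G_D⟩` : chords `a → c` and `c → b` with `a < b < c`. -/
def pairX3K (f : ℝ → E3) : ℝ :=
  pairK f fun p q => p.2 = q.1 ∧ p.1 < q.2 ∧ q.2 < p.2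

/-- Crossings of a 3-strand diagram between strand `i` (under) and strand `j` (over);
the corresponding chord is directed from `p.1` on strand `i` to `p.2` on strand `j`. -/
def CrossingL (f : Fin 3 → ℝ → E3) (i j : Fin 3) : Set (ℝ × ℝ) :=
  {p | pr12 (f i p.1) = pr12 (f j p.2) ∧ pr3 (f i p.1) < pr3 (f j p.2)}

/-- The sign of the crossing `p` between strand `i` (under) and strand `j` (over). -/
def csignL (f : Fin 3 → ℝ → E3) (i j : Fin 3) (p : ℝ × ℝ) : ℝ :=
  Real.sign (cross2 (deriv (f j) p.2) (deriv (f i) p.1))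

/-- Gauss diagram pairing for a 3-component long link. -/
def pairL (f : Fin 3 → ℝ → E3) (i₁ j₁ i₂ j₂ : Fin 3) (R : ℝ × ℝ → ℝ × ℝ → Prop) : ℝ :=
  ∑ᶠ q ∈ {q : (ℝ × ℝ) × (ℝ × ℝ) |
      q.1 ∈ CrossingL f i₁ j₁ ∧ q.2 ∈ CrossingL f i₂ j₂ ∧ R q.1 q.2},
    csignL f i₁ j₁ q.1 * csignL f i₂ j₂ q.2

/-- `⟨𝒳₁, G_D⟩` : a chord from `t` on strand 1 to strand 2, and a chord from strand 3 to
`t′` on strand 1, with `t < t′`. -/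
def pairL1 (f : Fin 3 → ℝ → E3) : ℝ := pairL f 0 1 2 0 fun p q => p.1 < q.2

/-- `⟨𝒳₂, G_D⟩` : a chord from strand 1 to `u` on strand 2, and a chord from strand 3 to
`u′` on strand 2, with `u < u′`. -/
def pairL2 (f : Fin 3 → ℝ → E3) : ℝ := pairL f 0 1 2 1 fun p q => p.2 < q.2

/-- `⟨𝒳₃, G_D⟩` : a chord from strand 1 to `v` on strand 3, and a chord from `v′` on
strand 3 to strand 2, with `v < v′`. -/
def pairL3 (f : Fin 3 → ℝ → E3) : ℝ := pairL f 0 2 2 1 fun p q => p.2 < q.1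

/-- `⟨𝒳′₁, G_D⟩` : as `𝒳₁` but with `t = t′` (a triple point). -/
def pairL1' (f : Fin 3 → ℝ → E3) : ℝ := pairL f 0 1 2 0 fun p q => p.1 = q.2

/-- `⟨𝒳′₂, G_D⟩` : as `𝒳₂` but with `u = u′` (a triple point). -/
def pairL2' (f : Fin 3 → ℝ → E3) : ℝ := pairL f 0 1 2 1 fun p q => p.2 = q.2

/-- `⟨𝒳′₃, G_D⟩` : as `𝒳₃` but with `v = v′` (a triple point). -/
def pairL3' (f : Fin 3 → ℝ → E3) : ℝ := pairL f 0 2 2 1 fun p q => p.2 = q.1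

/-! ### The localized unit 2-form `η` on `S²` -/

/-- The action of a 2×2 matrix on `ℝ³ = ℝ² × ℝ`, acting on the first two coordinates. -/
def act2 (A : Matrix (Fin 2) (Fin 2) ℝ) (v : E3) : E3 :=
  mk3 (A 0 0 * v 0 + A 0 1 * v 1) (A 1 0 * v 0 + A 1 1 * v 1) (v 2)

/-- `IsEtaForm ε g` says that `η = g · (standard area form of S²)` is a smooth 2-form on
`S²` such that: (i) `supp η` lies in the `ε`-neighbourhood of the north pole `N`;
(ii) `φ*η = det φ · η` for every `φ ∈ O(2) ⊆ O(3)` (since `φ* (area form) = det φ ·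
(area form)`, this amounts to `g ∘ φ = g`); (iii) `∫_{S²} η = 1`, i.e. the integral of
`g` against the surface measure of `S²` is `1`. -/
def IsEtaForm (ε : ℝ) (g : E3 → ℝ) : Prop :=
  ContDiff ℝ (⊤ : ℕ∞) g ∧
  (∀ v : E3, ‖v‖ = 1 → g v ≠ 0 → ‖v - NP‖ < ε) ∧
  (∀ A : Matrix (Fin 2) (Fin 2) ℝ, A * A.transpose = 1 →
    ∀ v : E3, ‖v‖ = 1 → g (act2 A v) = g v) ∧
  ∫ v : Metric.sphere (0 : E3) 1, g v ∂((volume : Measure E3).toSphere) = 1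

/-! ### Configuration space integrals -/

/-- `i`-th partial derivative of a map `ℝⁿ → ℝ³`. -/
def pdv {n : ℕ} (h : EuclideanSpace ℝ (Fin n) → E3) (i : Fin n)
    (x : EuclideanSpace ℝ (Fin n)) : E3 :=
  fderiv ℝ h x (EuclideanSpace.single i 1)

/-- The pullback `h*η` (for `η = g · (area form)`) evaluated at the point `x` on the
coordinate vectors `(e_i, e_j)`. -/
def form2 {n : ℕ} (g : E3 → ℝ) (h : EuclideanSpace ℝ (Fin n) → E3)
    (x : EuclideanSpace ℝ (Fin n)) (i j : Fin n) : ℝ :=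
  g (h x) * det3 (h x) (pdv h i x) (pdv h j x)

/-- `(h*η ∧ k*η)(e₀, e₁, e₂, e₃)` at `x`. -/
def wedge22 (g : E3 → ℝ) (h k : E4 → E3) (x : E4) : ℝ :=
  (1 / 4) * ∑ σ : Equiv.Perm (Fin 4),
    ((Equiv.Perm.sign σ : ℤ) : ℝ) * form2 g h x (σ 0) (σ 1) * form2 g k x (σ 2) (σ 3)

/-- `(h*η ∧ k*η ∧ l*η)(e₀, …, e₅)` at `x`. -/
def wedge222 (g : E3 → ℝ) (h k l : E6 → E3) (x : E6) : ℝ :=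
  (1 / 8) * ∑ σ : Equiv.Perm (Fin 6),
    ((Equiv.Perm.sign σ : ℤ) : ℝ) * form2 g h x (σ 0) (σ 1) * form2 g k x (σ 2) (σ 3) *
      form2 g l x (σ 4) (σ 5)

/-- The configuration space `C_X = {x₁ < x₂ < x₃ < x₄}`. -/
def CX : Set E4 := {x | x 0 < x 1 ∧ x 1 < x 2 ∧ x 2 < x 3}

/-- The integrand `ω_X = h₁₃*η ∧ h₄₂*η` for a long knot. -/
def omegaX (f : ℝ → E3) (g : E3 → ℝ) : E4 → ℝ :=
  wedge22 g (fun x => unitv (f (x 2) - f (x 0))) (fun x => unitv (f (x 1) - f (x 3)))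

/-- The configuration space integral `I_X(f)` of a long knot. -/
def IX (f : ℝ → E3) (g : E3 → ℝ) : ℝ := ∫ x in CX, omegaX f g x

/-- The free point `x₄ ∈ ℝ³` in a `Y`-configuration `(x₁,x₂,x₃;x₄) ∈ ℝ³ × ℝ³ = ℝ⁶`. -/
def ptY (x : E6) : E3 := mk3 (x 3) (x 4) (x 5)

/-- The configuration space `C_Y(f)` for a long knot. -/
def CY (f : ℝ → E3) : Set E6 :=
  {x | x 0 < x 1 ∧ x 1 < x 2 ∧ ptY x ≠ f (x 0) ∧ ptY x ≠ f (x 1) ∧ ptY x ≠ f (x 2)}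

/-- The integrand `ω_Y = h₁₄*η ∧ h₄₂*η ∧ h₃₄*η` for a long knot. -/
def omegaY (f : ℝ → E3) (g : E3 → ℝ) : E6 → ℝ :=
  wedge222 g (fun x => unitv (ptY x - f (x 0))) (fun x => unitv (f (x 1) - ptY x))
    (fun x => unitv (ptY x - f (x 2)))

/-- The configuration space integral `I_Y(f)` of a long knot. -/
def IY (f : ℝ → E3) (g : E3 → ℝ) : ℝ := ∫ x in CY f, omegaY f g x

def CL1 : Set E4 := {x | x 0 < x 1}
def CL2 : Set E4 := {x | x 1 < x 2}
def CL3 : Set E4 := {x | x 2 < x 3}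

/-- The integrand of `I_{𝒳₁}(f)` for a 3-component long link. -/
def omegaL1 (f : Fin 3 → ℝ → E3) (g : E3 → ℝ) : E4 → ℝ :=
  wedge22 g (fun x => unitv (f 1 (x 2) - f 0 (x 0))) (fun x => unitv (f 2 (x 3) - f 0 (x 1)))

/-- The integrand of `I_{𝒳₂}(f)` for a 3-component long link. -/
def omegaL2 (f : Fin 3 → ℝ → E3) (g : E3 → ℝ) : E4 → ℝ :=
  wedge22 g (fun x => unitv (f 1 (x 1) - f 0 (x 0))) (fun x => unitv (f 1 (x 2) - f 2 (x 3)))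

/-- The integrand of `I_{𝒳₃}(f)` for a 3-component long link. -/
def omegaL3 (f : Fin 3 → ℝ → E3) (g : E3 → ℝ) : E4 → ℝ :=
  wedge22 g (fun x => unitv (f 2 (x 2) - f 0 (x 0))) (fun x => unitv (f 1 (x 1) - f 2 (x 3)))

/-- The configuration space integral `I_{𝒳₁}(f)`. -/
def IL1 (f : Fin 3 → ℝ → E3) (g : E3 → ℝ) : ℝ := ∫ x in CL1, omegaL1 f g x

/-- The configuration space integral `I_{𝒳₂}(f)`. -/
def IL2 (f : Fin 3 → ℝ → E3) (g : E3 → ℝ) : ℝ := ∫ x in CL2, omegaL2 f g x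

/-- The configuration space integral `I_{𝒳₃}(f)`. -/
def IL3 (f : Fin 3 → ℝ → E3) (g : E3 → ℝ) : ℝ := ∫ x in CL3, omegaL3 f g x

/-- The configuration space `C_𝒴(f)` for a 3-component long link. -/
def CYL (f : Fin 3 → ℝ → E3) : Set E6 :=
  {x | ptY x ≠ f 0 (x 0) ∧ ptY x ≠ f 1 (x 1) ∧ ptY x ≠ f 2 (x 2)}

/-- The integrand `ω_𝒴 = h₁₄*η ∧ h₄₂*η ∧ h₃₄*η` for a 3-component long link. -/
def omegaYL (f : Fin 3 → ℝ → E3) (g : E3 → ℝ) : E6 → ℝ :=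
  wedge222 g (fun x => unitv (ptY x - f 0 (x 0))) (fun x => unitv (f 1 (x 1) - ptY x))
    (fun x => unitv (ptY x - f 2 (x 2)))

/-- The configuration space integral `I_𝒴(f)`. -/
def ILY (f : Fin 3 → ℝ → E3) (g : E3 → ℝ) : ℝ := ∫ x in CYL f, omegaYL f g x

/-! ### Model triple points -/

/-- The affine parametrization `t ↦ a + t • v` of a straight segment. -/
def seg (a v : E3) (t : ℝ) : E3 := a + t • v

/-- A model triple point: three straight segments `S₁, S₂, S₃` (indexed by `0, 1, 2`),
`S_k` parametrized by `seg (a k) (v k) : (-δ, δ) → ℝ³`, all parallel to the plane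
`N^⊥`, whose projections to `N^⊥` meet pairwise transversely at the single common point
which is the projection of each midpoint `a k`, and with `S₂` higher than `S₁`, `S₃`. -/
def IsModelTriple (a v : Fin 3 → E3) : Prop :=
  (∀ k, v k 2 = 0) ∧ (∀ k, v k ≠ 0) ∧
  pr12 (a 0) = pr12 (a 1) ∧ pr12 (a 1) = pr12 (a 2) ∧
  (∀ j k, j ≠ k → cross2 (v j) (v k) ≠ 0) ∧
  a 0 2 < a 1 2 ∧ a 2 2 < a 1 2

/-- A model triple point of type `(←, s₁, s₂, s₃)`: `S₁` passes over `S₃`, and the signs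
of the crossings `S₁–S₃`, `S₁–S₂`, `S₂–S₃` are `s₁, s₂, s₃` respectively. -/
def ModelLeft (a v : Fin 3 → E3) (s1 s2 s3 : ℝ) : Prop :=
  IsModelTriple a v ∧ a 2 2 < a 0 2 ∧
  s1 = Real.sign (cross2 (v 0) (v 2)) ∧
  s2 = Real.sign (cross2 (v 1) (v 0)) ∧
  s3 = Real.sign (cross2 (v 1) (v 2))

/-- A model triple point of type `(→, s₁, s₂, s₃)`: `S₃` passes over `S₁`, and the signs
of the crossings `S₁–S₃`, `S₁–S₂`, `S₂–S₃` are `s₁, s₂, s₃` respectively. -/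
def ModelRight (a v : Fin 3 → E3) (s1 s2 s3 : ℝ) : Prop :=
  IsModelTriple a v ∧ a 0 2 < a 2 2 ∧
  s1 = Real.sign (cross2 (v 2) (v 0)) ∧
  s2 = Real.sign (cross2 (v 1) (v 0)) ∧
  s3 = Real.sign (cross2 (v 1) (v 2))

/-- The cube `(-δ, δ)⁴ ⊆ ℝ⁴`. -/
def cube4 (δ : ℝ) : Set E4 := {x | ∀ i, |x i| < δ}

/-- The model configuration space integral `I_X^{X′₁}`: the two points `t₁ < t₂` lie on
`S₁`, the point `t₃` on `S₂` and the point `t₄` on `S₃`; the maps are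
`h₁₃ = unit (f₂(t₃) - f₁(t₁))` and `h₄₂ = unit (f₁(t₂) - f₃(t₄))`. -/
def IX1model (a v : Fin 3 → E3) (δ : ℝ) (g : E3 → ℝ) : ℝ :=
  ∫ x in cube4 δ ∩ {x : E4 | x 0 < x 1},
    wedge22 g (fun x => unitv (seg (a 1) (v 1) (x 2) - seg (a 0) (v 0) (x 0)))
      (fun x => unitv (seg (a 0) (v 0) (x 1) - seg (a 2) (v 2) (x 3))) x

/-- The model configuration space integral `I_X^{X′₂}` (`(X′₂, l)` for a model of type
`←`, `(X′₂, r)` for a model of type `→`): the two points `t₂ < t₃` lie on `S₂`, the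
point `t₁` on `S₁` and the point `t₄` on `S₃`; the maps are
`h₁₃ = unit (f₂(t₃) - f₁(t₁))` and `h₄₂ = unit (f₂(t₂) - f₃(t₄))`. -/
def IX2model (a v : Fin 3 → E3) (δ : ℝ) (g : E3 → ℝ) : ℝ :=
  ∫ x in cube4 δ ∩ {x : E4 | x 1 < x 2},
    wedge22 g (fun x => unitv (seg (a 1) (v 1) (x 2) - seg (a 0) (v 0) (x 0)))
      (fun x => unitv (seg (a 1) (v 1) (x 1) - seg (a 2) (v 2) (x 3))) x

/-- The model configuration space integral `I_X^{X′₃}`: the two points `t₃ < t₄` lie on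
`S₃`, the point `t₁` on `S₁` and the point `t₂` on `S₂`; the maps are
`h₁₃ = unit (f₃(t₃) - f₁(t₁))` and `h₄₂ = unit (f₂(t₂) - f₃(t₄))`. -/
def IX3model (a v : Fin 3 → E3) (δ : ℝ) (g : E3 → ℝ) : ℝ :=
  ∫ x in cube4 δ ∩ {x : E4 | x 2 < x 3},
    wedge22 g (fun x => unitv (seg (a 2) (v 2) (x 2) - seg (a 0) (v 0) (x 0)))
      (fun x => unitv (seg (a 1) (v 1) (x 1) - seg (a 2) (v 2) (x 3))) x

/-- The model `Y`-integral `I_Y^{s₁,s₂,s₃}` over `(-δ,δ)³ × ℝ³`: the point `t_k` lies on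
`S_k` and `x₄ ∈ ℝ³` is free; the maps are `h₁₄ = unit (x₄ - f₁(t₁))`,
`h₄₂ = unit (f₂(t₂) - x₄)` and `h₃₄ = unit (x₄ - f₃(t₃))`. -/
def IYmodel (a v : Fin 3 → E3) (δ : ℝ) (g : E3 → ℝ) : ℝ :=
  ∫ x in {x : E6 | |x 0| < δ ∧ |x 1| < δ ∧ |x 2| < δ ∧
      ptY x ≠ seg (a 0) (v 0) (x 0) ∧ ptY x ≠ seg (a 1) (v 1) (x 1) ∧
      ptY x ≠ seg (a 2) (v 2) (x 2)},
    wedge222 g (fun x => unitv (ptY x - seg (a 0) (v 0) (x 0)))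
      (fun x => unitv (seg (a 1) (v 1) (x 1) - ptY x))
      (fun x => unitv (ptY x - seg (a 2) (v 2) (x 2))) x

/-- Near every (triple or higher) multiple point of the diagram, the strands of the long
knot `f` are straight segments parallel to the plane `N^⊥`. -/
def StraightNearMultipleK (f : ℝ → E3) : Prop :=
  ∀ t u v : ℝ, t ≠ u → u ≠ v → t ≠ v →
    pr12 (f t) = pr12 (f u) → pr12 (f u) = pr12 (f v) →
    ∃ δ > (0 : ℝ), ∃ w : E3, w 2 = 0 ∧ ∀ s : ℝ, |s - t| < δ → f s = f t + (s - t) • w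

/-- Near every (triple or higher) multiple point of the diagram, the strands of the long
link `f` are straight segments parallel to the plane `N^⊥`. -/
def StraightNearMultipleL (f : Fin 3 → ℝ → E3) : Prop :=
  ∀ (i j k : Fin 3) (t u v : ℝ), (i, t) ≠ (j, u) → (j, u) ≠ (k, v) → (i, t) ≠ (k, v) →
    pr12 (f i t) = pr12 (f j u) → pr12 (f j u) = pr12 (f k v) →
    ∃ δ > (0 : ℝ), ∃ w : E3, w 2 = 0 ∧ ∀ s : ℝ, |s - t| < δ → f i s = f i t + (s - t) • w

/-! ### Closed 2-component links and the linking number -/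

/-- A smooth loop in `ℝ³`, parametrized with period 1 and injective on a period. -/
def IsLoop (f : ℝ → E3) : Prop :=
  ContDiff ℝ (⊤ : ℕ∞) f ∧ (∀ t, f (t + 1) = f t) ∧ (∀ t, deriv f t ≠ 0) ∧
    ∀ s t : ℝ, f s = f t → ∃ n : ℤ, t - s = n

/-- The diagram of the 2-component link `(f 0, f 1)` has only transverse double points. -/
def OnlyDouble2 (f : Fin 2 → ℝ → E3) : Prop :=
  (∀ i j s t, f i s ≠ f j t → pr12 (f i s) = pr12 (f j t) →
      cross2 (deriv (f i) s) (deriv (f j) t) ≠ 0) ∧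
  ∀ i j k s t u, f i s ≠ f j t → f j t ≠ f k u → f i s ≠ f k u →
    pr12 (f i s) = pr12 (f j t) → pr12 (f j t) = pr12 (f k u) → False

/-- The crossings of the diagram at which `f₂` passes over `f₁` (one parameter period). -/
def Crossing12 (f₁ f₂ : ℝ → E3) : Set (ℝ × ℝ) :=
  {p | p.1 ∈ Ico (0 : ℝ) 1 ∧ p.2 ∈ Ico (0 : ℝ) 1 ∧
    pr12 (f₁ p.1) = pr12 (f₂ p.2) ∧ pr3 (f₁ p.1) < pr3 (f₂ p.2)}

/-- The sum of the signs of the crossings of the diagram at which `f₂` passes over `f₁`;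
this is the linking number `lk(f₁, f₂)`, i.e. the mapping degree of
`h : S¹ × S¹ → S²`. -/
def lkSum (f₁ f₂ : ℝ → E3) : ℝ :=
  ∑ᶠ p ∈ Crossing12 f₁ f₂, Real.sign (cross2 (deriv f₂ p.2) (deriv f₁ p.1))

/-- The fundamental domain `[0,1) × [0,1)` of `S¹ × S¹`. -/
def sq01 : Set E2 := {x | x 0 ∈ Ico (0 : ℝ) 1 ∧ x 1 ∈ Ico (0 : ℝ) 1}

/-- `∫_{S¹×S¹} h*η` for `h(x₁,x₂) = unit (f₂(x₂) - f₁(x₁))`. -/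
def lkIntegral (f₁ f₂ : ℝ → E3) (g : E3 → ℝ) : ℝ :=
  ∫ x in sq01, form2 g (fun x : E2 => unitv (f₂ (x 1) - f₁ (x 0))) x 0 1

/-! ### Part 1: cutoffs and the Stokes argument on the torus -/

/-- cutoff function on `[0,∞)` -/
def cutP (β s : ℝ) : ℝ := (max 0 (1 - s / β)) ^ 2

/-- minus twice the derivative of `cutP` -/
def cutD (β s : ℝ) : ℝ := 4 / β * max 0 (1 - s / β)

lemma hasDerivAt_maxsq (x : ℝ) :
    HasDerivAt (fun x : ℝ => (max 0 x) ^ 2) (2 * max 0 x) x := by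
  rcases lt_trichotomy x 0 with h | h | h
  · have : (fun x : ℝ => (max 0 x) ^ 2) =ᶠ[𝓝 x] fun _ => 0 := by
      filter_upwards [Iio_mem_nhds h] with y hy
      rw [max_eq_left (le_of_lt hy)]; norm_num
    rw [max_eq_left h.le, mul_zero]
    exact (hasDerivAt_const x (0:ℝ)).congr_of_eventuallyEq this
  · subst h
    rw [hasDerivAt_iff_isLittleO]
    simp only [max_self, ne_eq, OfNat.ofNat_ne_zero, not_false_eq_true, zero_pow, sub_zero,
      mul_zero, smul_zero]
    have h1 : (fun x : ℝ => (max 0 x) ^ 2) =O[𝓝 0] fun x : ℝ => x ^ 2 := by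
      refine Asymptotics.IsBigO.of_bound 1 (Eventually.of_forall fun y => ?_)
      rw [Real.norm_eq_abs, Real.norm_eq_abs, abs_of_nonneg (sq_nonneg _),
        abs_of_nonneg (sq_nonneg _), one_mul]
      rcases le_total 0 y with h | h
      · rw [max_eq_right h]
      · rw [max_eq_left h]; nlinarith [sq_nonneg y]
    refine h1.trans_isLittleO ?_
    have := Asymptotics.isLittleO_pow_id (𝕜 := ℝ) (n := 2) (by norm_num)
    simpa using this
  · have : (fun x : ℝ => (max 0 x) ^ 2) =ᶠ[𝓝 x] fun x => x ^ 2 := by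
      filter_upwards [Ioi_mem_nhds h] with y hy
      rw [max_eq_right (le_of_lt hy)]
    rw [max_eq_right h.le]
    have := (hasDerivAt_pow 2 x).congr_of_eventuallyEq this
    simpa using this

lemma cutP_hasDerivAt (β s : ℝ) : HasDerivAt (cutP β) (-(cutD β s) / 2) s := by
  have h1 : HasDerivAt (fun s : ℝ => 1 - s / β) (-(1 / β)) s := by
    have := ((hasDerivAt_id s).div_const β).const_sub 1
    simpa using this
  have := (hasDerivAt_maxsq (1 - s / β)).comp s h1
  refine (this.congr_deriv ?_)
  unfold cutD; ring

lemma cutP_cont (β : ℝ) : Continuous (cutP β) := by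
  unfold cutP; fun_prop

lemma cutD_cont (β : ℝ) : Continuous (cutD β) := by
  unfold cutD; fun_prop

lemma cutP_zero {β s : ℝ} (hβ : 0 < β) (h : β ≤ s) : cutP β s = 0 := by
  unfold cutP
  have : 1 - s / β ≤ 0 := by
    rw [sub_nonpos, le_div_iff₀ hβ]; linarith
  rw [max_eq_left this]; norm_num

lemma cutD_zero {β s : ℝ} (hβ : 0 < β) (h : β ≤ s) : cutD β s = 0 := by
  unfold cutD
  have : 1 - s / β ≤ 0 := by
    rw [sub_nonpos, le_div_iff₀ hβ]; linarith
  rw [max_eq_left this]; norm_num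

lemma cutP_near {β s : ℝ} (hβ : 0 < β) (h0 : 0 ≤ s) : |1 - cutP β s| ≤ 2 / β * s := by
  unfold cutP
  have h1 : 0 ≤ s / β := by positivity
  have e : 2 / β * s = 2 * (s / β) := by ring
  rw [e]
  rcases le_total 0 (1 - s / β) with h | h
  · rw [max_eq_right h, abs_of_nonneg (by nlinarith)]; nlinarith
  · rw [max_eq_left h, abs_of_nonneg (by norm_num)]; nlinarith

section stokes

def uu (a b : Fin 3 → ℝ → ℝ) (i : Fin 3) (x : ℝ × ℝ) : ℝ := b i x.2 - a i x.1
def rho2 (a b : Fin 3 → ℝ → ℝ) (x : ℝ × ℝ) : ℝ := uu a b 0 x ^ 2 + uu a b 1 x ^ 2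
def rr (a b : Fin 3 → ℝ → ℝ) (x : ℝ × ℝ) : ℝ :=
  √(uu a b 0 x ^ 2 + uu a b 1 x ^ 2 + uu a b 2 x ^ 2)
def zz (a b : Fin 3 → ℝ → ℝ) (x : ℝ × ℝ) : ℝ := uu a b 2 x / rr a b x
/-- determinant of the differential of the planar map `(u 0, u 1)` -/
def dd (a b : Fin 3 → ℝ → ℝ) (x : ℝ × ℝ) : ℝ :=
  deriv (b 0) x.2 * deriv (a 1) x.1 - deriv (b 1) x.2 * deriv (a 0) x.1
/-- the Gauss integrand -/
def JJ (a b : Fin 3 → ℝ → ℝ) (x : ℝ × ℝ) : ℝ :=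
  (uu a b 0 x * (-deriv (a 1) x.1 * deriv (b 2) x.2 + deriv (a 2) x.1 * deriv (b 1) x.2)
   - uu a b 1 x * (-deriv (a 0) x.1 * deriv (b 2) x.2 + deriv (a 2) x.1 * deriv (b 0) x.2)
   + uu a b 2 x * (-deriv (a 0) x.1 * deriv (b 1) x.2 + deriv (a 1) x.1 * deriv (b 0) x.2))
   / rr a b x ^ 3

open Classical in
def cutPP (a b : Fin 3 → ℝ → ℝ) (β : ℝ) (x : ℝ × ℝ) : ℝ :=
  if 0 < uu a b 2 x then cutP β (rho2 a b x) else 0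
open Classical in
def cutDD (a b : Fin 3 → ℝ → ℝ) (β : ℝ) (x : ℝ × ℝ) : ℝ :=
  if 0 < uu a b 2 x then cutD β (rho2 a b x) else 0

lemma ddiff {c : ℝ → ℝ} (h : ContDiff ℝ (⊤ : ℕ∞) c) : ContDiff ℝ (⊤ : ℕ∞) (deriv c) :=
  (contDiff_infty_iff_deriv.1 h).2

lemma cdd {c : ℝ → ℝ} (h : ContDiff ℝ (⊤ : ℕ∞) c) : Differentiable ℝ c :=
  (contDiff_infty_iff_deriv.1 h).1

lemma fderivA_fst {A : ℝ × ℝ → ℝ} {s t v : ℝ} (hA : DifferentiableAt ℝ A (s, t))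
    (h : HasDerivAt (fun s => A (s, t)) v s) : fderiv ℝ A (s, t) (1, 0) = v := by
  have h1 : HasDerivAt (fun s : ℝ => ((s, t) : ℝ × ℝ)) ((1, 0) : ℝ × ℝ) s :=
    (hasDerivAt_id s).prodMk (hasDerivAt_const s t)
  exact (hA.hasFDerivAt.comp_hasDerivAt s h1).unique h

lemma fderivA_snd {A : ℝ × ℝ → ℝ} {s t v : ℝ} (hA : DifferentiableAt ℝ A (s, t))
    (h : HasDerivAt (fun t => A (s, t)) v t) : fderiv ℝ A (s, t) (0, 1) = v := by
  have h1 : HasDerivAt (fun t : ℝ => ((s, t) : ℝ × ℝ)) ((0, 1) : ℝ × ℝ) t :=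
    (hasDerivAt_const t s).prodMk (hasDerivAt_id t)
  exact (hA.hasFDerivAt.comp_hasDerivAt t h1).unique h

variable {a b : Fin 3 → ℝ → ℝ}

lemma uu_contDiff (ha : ∀ i, ContDiff ℝ (⊤ : ℕ∞) (a i))
    (hb : ∀ i, ContDiff ℝ (⊤ : ℕ∞) (b i)) (i : Fin 3) : ContDiff ℝ (⊤ : ℕ∞) (uu a b i) := by
  unfold uu
  exact ((hb i).comp contDiff_snd).sub ((ha i).comp contDiff_fst)

lemma rr_pos {x : ℝ × ℝ} (h : ∃ i, uu a b i x ≠ 0) : 0 < rr a b x := by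
  unfold rr
  apply Real.sqrt_pos.2
  obtain ⟨i, hi⟩ := h
  have := pow_pos (abs_pos.2 hi) 2
  rw [sq_abs] at this
  fin_cases i <;> simp at this hi ⊢ <;> positivity

lemma rr_sq (x : ℝ × ℝ) : rr a b x ^ 2 = rho2 a b x + uu a b 2 x ^ 2 := by
  unfold rr rho2
  rw [Real.sq_sqrt (by positivity)]

lemma rho2_nonneg (x : ℝ × ℝ) : 0 ≤ rho2 a b x := by unfold rho2; positivity

/-- near each point, either the height difference is positive or the cutoffs vanish -/
lemma cut_cases (ha : ∀ i, ContDiff ℝ (⊤ : ℕ∞) (a i)) (hb : ∀ i, ContDiff ℝ (⊤ : ℕ∞) (b i))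
    {β : ℝ} (hβ : 0 < β) (hsep : ∀ x, rho2 a b x ≤ β → uu a b 2 x ≠ 0) (x : ℝ × ℝ) :
    (∀ᶠ y in 𝓝 x, 0 < uu a b 2 y ∧ cutPP a b β y = cutP β (rho2 a b y) ∧
      cutDD a b β y = cutD β (rho2 a b y)) ∨
    (∀ᶠ y in 𝓝 x, cutPP a b β y = 0 ∧ cutDD a b β y = 0) := by
  have hc : ∀ i, Continuous (uu a b i) := fun i => (uu_contDiff ha hb i).continuous
  have hr : Continuous (rho2 a b) := by
    unfold rho2; exact ((hc 0).pow 2).add ((hc 1).pow 2)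
  rcases lt_trichotomy (uu a b 2 x) 0 with h | h | h
  · right
    filter_upwards [(hc 2).continuousAt.eventually (Iio_mem_nhds h)] with y hy
    have : ¬ (0 < uu a b 2 y) := not_lt.2 (le_of_lt hy)
    simp [cutPP, cutDD, this]
  · right
    have : β < rho2 a b x := by
      by_contra h'
      exact hsep x (not_lt.1 h') h
    filter_upwards [hr.continuousAt.eventually (Ioi_mem_nhds this)] with y hy
    simp [cutPP, cutDD, cutP_zero hβ (le_of_lt hy), cutD_zero hβ (le_of_lt hy)]
  · left
    filter_upwards [(hc 2).continuousAt.eventually (Ioi_mem_nhds h)] with y hy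
    have hy : 0 < uu a b 2 y := hy
    simp [cutPP, cutDD, hy]

end stokes

/-! ### Part 2: derivatives -/

lemma curve_z {v0 v1 v2 : ℝ → ℝ} {p0 p1 p2 s : ℝ} (h0 : HasDerivAt v0 p0 s)
    (h1 : HasDerivAt v1 p1 s) (h2 : HasDerivAt v2 p2 s)
    (hpos : 0 < √(v0 s ^ 2 + v1 s ^ 2 + v2 s ^ 2)) :
    HasDerivAt (fun s => v2 s / √(v0 s ^ 2 + v1 s ^ 2 + v2 s ^ 2))
      ((p2 * √(v0 s ^ 2 + v1 s ^ 2 + v2 s ^ 2) ^ 2 - v2 s * (v0 s * p0 + v1 s * p1 + v2 s * p2))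
        / √(v0 s ^ 2 + v1 s ^ 2 + v2 s ^ 2) ^ 3) s := by
  have hs : v0 s ^ 2 + v1 s ^ 2 + v2 s ^ 2 ≠ 0 := (Real.sqrt_pos.1 hpos).ne'
  have hq := (((h0.fun_pow 2).fun_add (h1.fun_pow 2)).fun_add (h2.fun_pow 2)).sqrt hs
  have := h2.fun_div hq hpos.ne'
  refine this.congr_deriv ?_
  field_simp
  push_cast
  ring

/-- closedness of `dφ` in one direction -/
lemma curve_phi {v0 v1 : ℝ → ℝ} {p0 p1 q0 q1 s : ℝ} (h0 : HasDerivAt v0 p0 s)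
    (h1 : HasDerivAt v1 p1 s) (hne : v0 s ^ 2 + v1 s ^ 2 ≠ 0) :
    HasDerivAt (fun s => (v0 s * q1 - v1 s * q0) / (v0 s ^ 2 + v1 s ^ 2))
      (((p0 * q1 - p1 * q0) * (v0 s ^ 2 + v1 s ^ 2)
        - (v0 s * q1 - v1 s * q0) * (2 * (v0 s * p0 + v1 s * p1)))
        / (v0 s ^ 2 + v1 s ^ 2) ^ 2) s := by
  have := ((h0.fun_mul (hasDerivAt_const s q1)).fun_sub (h1.fun_mul (hasDerivAt_const s q0))).fun_div
    ((h0.fun_pow 2).fun_add (h1.fun_pow 2)) hne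
  refine this.congr_deriv ?_
  congr 1
  push_cast
  ring

section stokes2
variable {a b : Fin 3 → ℝ → ℝ}

lemma uu_s (ha : ∀ i, ContDiff ℝ (⊤ : ℕ∞) (a i)) (i : Fin 3) (s t : ℝ) :
    HasDerivAt (fun s => uu a b i (s, t)) (-deriv (a i) s) s := by
  have := ((cdd (ha i) s).hasDerivAt).const_sub (b i t)
  simpa [uu] using this

lemma uu_t (hb : ∀ i, ContDiff ℝ (⊤ : ℕ∞) (b i)) (i : Fin 3) (s t : ℝ) :
    HasDerivAt (fun t => uu a b i (s, t)) (deriv (b i) t) t := by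
  have := ((cdd (hb i) t).hasDerivAt).sub_const (a i s)
  simpa [uu] using this

lemma rr_contDiff (ha : ∀ i, ContDiff ℝ (⊤ : ℕ∞) (a i)) (hb : ∀ i, ContDiff ℝ (⊤ : ℕ∞) (b i))
    (hne : ∀ x, ∃ i, uu a b i x ≠ 0) : ContDiff ℝ (⊤ : ℕ∞) (rr a b) := by
  unfold rr
  refine ContDiff.sqrt ?_ ?_
  · exact (((uu_contDiff ha hb 0).pow 2).add ((uu_contDiff ha hb 1).pow 2)).add
      ((uu_contDiff ha hb 2).pow 2)
  · intro x
    exact (Real.sqrt_pos.1 (rr_pos (hne x))).ne'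

lemma zz_contDiff (ha : ∀ i, ContDiff ℝ (⊤ : ℕ∞) (a i)) (hb : ∀ i, ContDiff ℝ (⊤ : ℕ∞) (b i))
    (hne : ∀ x, ∃ i, uu a b i x ≠ 0) : ContDiff ℝ (⊤ : ℕ∞) (zz a b) := by
  unfold zz
  exact (uu_contDiff ha hb 2).div (rr_contDiff ha hb hne) fun x => (rr_pos (hne x)).ne'

lemma rho2_contDiff (ha : ∀ i, ContDiff ℝ (⊤ : ℕ∞) (a i)) (hb : ∀ i, ContDiff ℝ (⊤ : ℕ∞) (b i)) :
    ContDiff ℝ (⊤ : ℕ∞) (rho2 a b) := by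
  unfold rho2
  exact ((uu_contDiff ha hb 0).pow 2).add ((uu_contDiff ha hb 1).pow 2)

lemma dd_cont (ha : ∀ i, ContDiff ℝ (⊤ : ℕ∞) (a i)) (hb : ∀ i, ContDiff ℝ (⊤ : ℕ∞) (b i)) :
    Continuous (dd a b) := by
  unfold dd
  have h1 := fun i => (ddiff (ha i)).continuous
  have h2 := fun i => (ddiff (hb i)).continuous
  fun_prop

lemma JJ_cont (ha : ∀ i, ContDiff ℝ (⊤ : ℕ∞) (a i)) (hb : ∀ i, ContDiff ℝ (⊤ : ℕ∞) (b i))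
    (hne : ∀ x, ∃ i, uu a b i x ≠ 0) : Continuous (JJ a b) := by
  unfold JJ
  have h1 := fun i => (ddiff (ha i)).continuous
  have h2 := fun i => (ddiff (hb i)).continuous
  have h3 := fun i => (uu_contDiff ha hb i).continuous
  refine Continuous.div ?_ ((rr_contDiff ha hb hne).continuous.pow 3)
    fun x => pow_ne_zero 3 (rr_pos (hne x)).ne'
  fun_prop

lemma cutPP_diff (ha : ∀ i, ContDiff ℝ (⊤ : ℕ∞) (a i)) (hb : ∀ i, ContDiff ℝ (⊤ : ℕ∞) (b i))
    {β : ℝ} (hβ : 0 < β) (hsep : ∀ x, rho2 a b x ≤ β → uu a b 2 x ≠ 0) :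
    Differentiable ℝ (cutPP a b β) := by
  intro x
  rcases cut_cases ha hb hβ hsep x with h | h
  · have h1 : DifferentiableAt ℝ (fun y => cutP β (rho2 a b y)) x :=
      ((cutP_hasDerivAt β _).differentiableAt).comp x
        ((rho2_contDiff ha hb).differentiable (by simp) x)
    exact h1.congr_of_eventuallyEq (h.mono fun y hy => hy.2.1)
  · exact (differentiableAt_const (0:ℝ)).congr_of_eventuallyEq (h.mono fun y hy => hy.1)

lemma cutDD_cont (ha : ∀ i, ContDiff ℝ (⊤ : ℕ∞) (a i)) (hb : ∀ i, ContDiff ℝ (⊤ : ℕ∞) (b i))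
    {β : ℝ} (hβ : 0 < β) (hsep : ∀ x, rho2 a b x ≤ β → uu a b 2 x ≠ 0) :
    Continuous (cutDD a b β) := by
  rw [continuous_iff_continuousAt]
  intro x
  rcases cut_cases ha hb hβ hsep x with h | h
  · have h1 : ContinuousAt (fun y => cutD β (rho2 a b y)) x :=
      ((cutD_cont β).comp (rho2_contDiff ha hb).continuous).continuousAt
    exact h1.congr (h.mono fun y hy => hy.2.2.symm)
  · exact (continuousAt_const (y := (0:ℝ))).congr (h.mono fun y hy => hy.2.symm)

/-- derivative of the cutoff along a curve -/
lemma cutPP_curve (ha : ∀ i, ContDiff ℝ (⊤ : ℕ∞) (a i)) (hb : ∀ i, ContDiff ℝ (⊤ : ℕ∞) (b i))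
    {β : ℝ} (hβ : 0 < β) (hsep : ∀ x, rho2 a b x ≤ β → uu a b 2 x ≠ 0)
    {γ : ℝ → ℝ × ℝ} {s p0 p1 : ℝ} (hγ : ContinuousAt γ s)
    (h0 : HasDerivAt (fun s => uu a b 0 (γ s)) p0 s)
    (h1 : HasDerivAt (fun s => uu a b 1 (γ s)) p1 s) :
    HasDerivAt (fun s => cutPP a b β (γ s))
      (-cutDD a b β (γ s) * (uu a b 0 (γ s) * p0 + uu a b 1 (γ s) * p1)) s := by
  rcases cut_cases ha hb hβ hsep (γ s) with h | h
  · have h2 := h.self_of_nhds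
    have h3 := hγ.eventually h
    have h4 : HasDerivAt (fun s => rho2 a b (γ s)) _ s := (h0.fun_pow 2).fun_add (h1.fun_pow 2)
    have h5 := (cutP_hasDerivAt β (rho2 a b (γ s))).comp s h4
    have h6 := h5.congr_of_eventuallyEq (f₁ := fun s => cutPP a b β (γ s))
      (h3.mono fun y hy => hy.2.1)
    refine h6.congr_deriv ?_
    rw [h2.2.2]
    push_cast
    ring
  · have h2 := h.self_of_nhds
    have h3 := hγ.eventually h
    rw [h2.2]
    have := (hasDerivAt_const s (0:ℝ)).congr_of_eventuallyEq (f₁ := fun s => cutPP a b β (γ s))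
      (h3.mono fun y hy => hy.1)
    simpa using this

/-- the function multiplying `dφ` -/
def Dfun (a b : Fin 3 → ℝ → ℝ) (β : ℝ) (F : ℝ → ℝ) (c : ℝ) (x : ℝ × ℝ) : ℝ :=
  F (zz a b x) - c * cutPP a b β x

def phS (a b : Fin 3 → ℝ → ℝ) (x : ℝ × ℝ) : ℝ :=
  (uu a b 0 x * (-deriv (a 1) x.1) - uu a b 1 x * (-deriv (a 0) x.1)) / rho2 a b x
def phT (a b : Fin 3 → ℝ → ℝ) (x : ℝ × ℝ) : ℝ :=
  (uu a b 0 x * deriv (b 1) x.2 - uu a b 1 x * deriv (b 0) x.2) / rho2 a b x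

lemma D_curve (ha : ∀ i, ContDiff ℝ (⊤ : ℕ∞) (a i)) (hb : ∀ i, ContDiff ℝ (⊤ : ℕ∞) (b i))
    (hne : ∀ x, ∃ i, uu a b i x ≠ 0)
    {β : ℝ} (hβ : 0 < β) (hsep : ∀ x, rho2 a b x ≤ β → uu a b 2 x ≠ 0)
    {F G : ℝ → ℝ} (hF : ∀ z, HasDerivAt F (G z) z) (c : ℝ)
    {γ : ℝ → ℝ × ℝ} {s p0 p1 p2 : ℝ} (hγ : ContinuousAt γ s)
    (h0 : HasDerivAt (fun s => uu a b 0 (γ s)) p0 s)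
    (h1 : HasDerivAt (fun s => uu a b 1 (γ s)) p1 s)
    (h2 : HasDerivAt (fun s => uu a b 2 (γ s)) p2 s) :
    HasDerivAt (fun s => Dfun a b β F c (γ s))
      (G (zz a b (γ s)) * ((p2 * rr a b (γ s) ^ 2 - uu a b 2 (γ s) * (uu a b 0 (γ s) * p0
        + uu a b 1 (γ s) * p1 + uu a b 2 (γ s) * p2)) / rr a b (γ s) ^ 3)
       + c * (cutDD a b β (γ s) * (uu a b 0 (γ s) * p0 + uu a b 1 (γ s) * p1))) s := by
  have hz : HasDerivAt (fun s => zz a b (γ s)) _ s := curve_z h0 h1 h2 (rr_pos (hne (γ s)))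
  have hFz := (hF (zz a b (γ s))).comp s hz
  have hc := (cutPP_curve ha hb hβ hsep hγ h0 h1).const_mul c
  have := hFz.fun_sub hc
  refine this.congr_deriv ?_
  unfold rr
  ring

lemma D_diff (ha : ∀ i, ContDiff ℝ (⊤ : ℕ∞) (a i)) (hb : ∀ i, ContDiff ℝ (⊤ : ℕ∞) (b i))
    (hne : ∀ x, ∃ i, uu a b i x ≠ 0)
    {β : ℝ} (hβ : 0 < β) (hsep : ∀ x, rho2 a b x ≤ β → uu a b 2 x ≠ 0)
    {F G : ℝ → ℝ} (hF : ∀ z, HasDerivAt F (G z) z) (c : ℝ) :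
    Differentiable ℝ (Dfun a b β F c) := by
  have h1 : Differentiable ℝ F := fun z => (hF z).differentiableAt
  have h2 := (zz_contDiff ha hb hne).differentiable (by simp)
  have h3 := cutPP_diff ha hb hβ hsep
  unfold Dfun
  exact (h1.comp h2).sub (h3.const_mul c)

lemma ph_diff (ha : ∀ i, ContDiff ℝ (⊤ : ℕ∞) (a i)) (hb : ∀ i, ContDiff ℝ (⊤ : ℕ∞) (b i))
    {x : ℝ × ℝ} (hx : rho2 a b x ≠ 0) :
    DifferentiableAt ℝ (phS a b) x ∧ DifferentiableAt ℝ (phT a b) x := by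
  have h0 := fun i => (uu_contDiff ha hb i).differentiable (by simp)
  have h1 := fun i => cdd (ddiff (ha i))
  have h2 := fun i => cdd (ddiff (hb i))
  have h3 := (rho2_contDiff ha hb).differentiable (by simp)
  have h1' : ∀ i, Differentiable ℝ fun x : ℝ × ℝ => deriv (a i) x.1 :=
    fun i => (h1 i).comp differentiable_fst
  have h2' : ∀ i, Differentiable ℝ fun x : ℝ × ℝ => deriv (b i) x.2 :=
    fun i => (h2 i).comp differentiable_snd
  constructor
  · unfold phS
    simp only [div_eq_mul_inv]
    exact (((h0 0 x).mul (h1' 1 x).neg).sub ((h0 1 x).mul (h1' 0 x).neg)).mul ((h3 x).inv hx)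
  · unfold phT
    simp only [div_eq_mul_inv]
    exact (((h0 0 x).mul (h2' 1 x)).sub ((h0 1 x).mul (h2' 0 x))).mul ((h3 x).inv hx)

/-- the exterior derivative of `D dφ` -/
lemma stokes_pointwise (ha : ∀ i, ContDiff ℝ (⊤ : ℕ∞) (a i)) (hb : ∀ i, ContDiff ℝ (⊤ : ℕ∞) (b i))
    (hne : ∀ x, ∃ i, uu a b i x ≠ 0)
    {β : ℝ} (hβ : 0 < β) (hsep : ∀ x, rho2 a b x ≤ β → uu a b 2 x ≠ 0)
    {F G : ℝ → ℝ} (hF : ∀ z, HasDerivAt F (G z) z) (c : ℝ) {x : ℝ × ℝ} (hx : rho2 a b x ≠ 0) :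
    fderiv ℝ (fun x => Dfun a b β F c x * phT a b x) x (1, 0) +
    fderiv ℝ (fun x => -(Dfun a b β F c x * phS a b x)) x (0, 1) =
      - (G (zz a b x) * JJ a b x) + c * (cutDD a b β x * dd a b x) := by
  obtain ⟨s, t⟩ := x
  obtain ⟨hpS, hpT⟩ := ph_diff ha hb hx
  have hD := D_diff ha hb hne hβ hsep hF c (s, t)
  have hγs : ContinuousAt (fun s : ℝ => (s, t)) s := by fun_prop
  have hγt : ContinuousAt (fun t : ℝ => (s, t)) t := by fun_prop
  have Ds := D_curve ha hb hne hβ hsep hF c hγs (uu_s ha 0 s t) (uu_s ha 1 s t) (uu_s ha 2 s t)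
  have Dt := D_curve ha hb hne hβ hsep hF c hγt (uu_t hb 0 s t) (uu_t hb 1 s t) (uu_t hb 2 s t)
  have PT : HasDerivAt (fun s => phT a b (s, t)) _ s :=
    curve_phi (q0 := deriv (b 0) t) (q1 := deriv (b 1) t) (uu_s ha 0 s t) (uu_s ha 1 s t) hx
  have PS : HasDerivAt (fun t => phS a b (s, t)) _ t :=
    curve_phi (q0 := -deriv (a 0) s) (q1 := -deriv (a 1) s) (uu_t hb 0 s t) (uu_t hb 1 s t) hx
  rw [fderivA_fst (hD.fun_mul hpT) (Ds.fun_mul PT), fderivA_snd (hD.fun_mul hpS).fun_neg (Dt.fun_mul PS).fun_neg]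
  have hr := (rr_pos (hne (s, t))).ne'
  have hr2 := rr_sq (a := a) (b := b) (s, t)
  have hrho : rho2 a b (s, t) = uu a b 0 (s, t) ^ 2 + uu a b 1 (s, t) ^ 2 := rfl
  unfold phT phS JJ dd
  simp only
  rw [hrho] at hx hr2
  simp only [hrho]
  generalize uu a b 0 (s, t) = u0 at *
  generalize uu a b 1 (s, t) = u1 at *
  generalize uu a b 2 (s, t) = u2 at *
  generalize rr a b (s, t) = r at *
  generalize G (zz a b (s, t)) = Gz at *
  generalize cutDD a b β (s, t) = P at *
  generalize Dfun a b β F c (s, t) = D at *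
  generalize deriv (a 0) s = p0 at *
  generalize deriv (a 1) s = p1 at *
  generalize deriv (a 2) s = p2 at *
  generalize deriv (b 0) t = q0 at *
  generalize deriv (b 1) t = q1 at *
  generalize deriv (b 2) t = q2 at *
  clear Ds Dt PT PS hD hpS hpT
  rw [hr2]
  field_simp
  ring

end stokes2

/-! ### Part 3: Stokes on the torus -/

section stokes3
variable {a b : Fin 3 → ℝ → ℝ}

lemma D_bigO (ha : ∀ i, ContDiff ℝ (⊤ : ℕ∞) (a i)) (hb : ∀ i, ContDiff ℝ (⊤ : ℕ∞) (b i))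
    (hne : ∀ x, ∃ i, uu a b i x ≠ 0)
    {β : ℝ} (hβ : 0 < β) (hsep : ∀ x, rho2 a b x ≤ β → uu a b 2 x ≠ 0)
    {F G : ℝ → ℝ} (hF : ∀ z, HasDerivAt F (G z) z) (hF0 : F (-1) = 0)
    {x : ℝ × ℝ} (hx : rho2 a b x = 0) :
    Dfun a b β F (F 1) =O[𝓝 x] rho2 a b := by
  have hu2 : uu a b 2 x ≠ 0 := hsep x (by rw [hx]; exact hβ.le)
  have cu := (uu_contDiff ha hb 2).continuous
  have cr := (rr_contDiff ha hb hne).continuous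
  have cz := (zz_contDiff ha hb hne).continuous
  have hrx : rr a b x = |uu a b 2 x| := by
    rw [← Real.sqrt_sq_eq_abs]
    unfold rr
    have : uu a b 0 x ^ 2 + uu a b 1 x ^ 2 = 0 := hx
    rw [this, zero_add]
  rcases lt_or_gt_of_ne hu2 with h | h
  · -- south pole
    have hzx : zz a b x = -1 := by
      unfold zz; rw [hrx, abs_of_neg h]; field_simp
    have h1 : (fun z => F z - F (-1)) =O[𝓝 (-1)] fun z => z - (-1) := (hF (-1)).isBigO_sub
    have h2 : Tendsto (zz a b) (𝓝 x) (𝓝 (-1)) := by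
      rw [← hzx]; exact cz.tendsto x
    have h3 := h1.comp_tendsto h2
    have h4 : (fun y => zz a b y - (-1)) =O[𝓝 x] rho2 a b := by
      have e : ∀ᶠ y in 𝓝 x, zz a b y - (-1) =
          (1 / (rr a b y * (rr a b y - uu a b 2 y))) * rho2 a b y := by
        filter_upwards [cu.continuousAt.eventually (Iio_mem_nhds h)] with y hy
        have hy : uu a b 2 y < 0 := hy
        have hr := rr_pos (hne y)
        have h5 : rr a b y - uu a b 2 y ≠ 0 := by linarith
        have h6 := rr_sq (a := a) (b := b) y
        have h7 : rho2 a b y = rr a b y ^ 2 - uu a b 2 y ^ 2 := by linarith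
        rw [h7]
        unfold zz
        field_simp
        ring
      refine Asymptotics.IsBigO.congr' ?_ (EventuallyEq.symm e) EventuallyEq.rfl
      have h5 : (fun y => 1 / (rr a b y * (rr a b y - uu a b 2 y))) =O[𝓝 x] fun _ => (1:ℝ) := by
        have : ContinuousAt (fun y => 1 / (rr a b y * (rr a b y - uu a b 2 y))) x := by
          refine continuousAt_const.div ((cr.mul (cr.sub cu)).continuousAt) ?_
          have hr := rr_pos (hne x)
          have h5 : rr a b x - uu a b 2 x ≠ 0 := by linarith
          exact mul_ne_zero hr.ne' h5
        exact this.isBigO_one ℝ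
      simpa using h5.mul (Asymptotics.isBigO_refl (rho2 a b) (𝓝 x))
    have h5 := h3.trans h4
    refine h5.congr' ?_ EventuallyEq.rfl
    filter_upwards [cu.continuousAt.eventually (Iio_mem_nhds h)] with y hy
    have hy : ¬ (0 < uu a b 2 y) := not_lt.2 (le_of_lt hy)
    simp [Dfun, cutPP, hy, hF0]
  · -- north pole
    have hzx : zz a b x = 1 := by
      unfold zz; rw [hrx, abs_of_pos h]; field_simp
    have h1 : (fun z => F z - F 1) =O[𝓝 1] fun z => z - 1 := (hF 1).isBigO_sub
    have h2 : Tendsto (zz a b) (𝓝 x) (𝓝 1) := by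
      rw [← hzx]; exact cz.tendsto x
    have h3 := h1.comp_tendsto h2
    have h4 : (fun y => zz a b y - 1) =O[𝓝 x] rho2 a b := by
      have e : ∀ᶠ y in 𝓝 x, zz a b y - 1 =
          (-1 / (rr a b y * (rr a b y + uu a b 2 y))) * rho2 a b y := by
        filter_upwards [cu.continuousAt.eventually (Ioi_mem_nhds h)] with y hy
        have hy : 0 < uu a b 2 y := hy
        have hr := rr_pos (hne y)
        have h5 : rr a b y + uu a b 2 y ≠ 0 := by linarith
        have h6 := rr_sq (a := a) (b := b) y
        have h7 : rho2 a b y = rr a b y ^ 2 - uu a b 2 y ^ 2 := by linarith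
        rw [h7]
        unfold zz
        field_simp
        ring
      refine Asymptotics.IsBigO.congr' ?_ (EventuallyEq.symm e) EventuallyEq.rfl
      have h5 : (fun y => -1 / (rr a b y * (rr a b y + uu a b 2 y))) =O[𝓝 x] fun _ => (1:ℝ) := by
        have : ContinuousAt (fun y => -1 / (rr a b y * (rr a b y + uu a b 2 y))) x := by
          refine continuousAt_const.div ((cr.mul (cr.add cu)).continuousAt) ?_
          have hr := rr_pos (hne x)
          have h5 : rr a b x + uu a b 2 x ≠ 0 := by linarith
          exact mul_ne_zero hr.ne' h5
        exact this.isBigO_one ℝ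
      simpa using h5.mul (Asymptotics.isBigO_refl (rho2 a b) (𝓝 x))
    have h5 := h3.trans h4
    have h6 : (fun y => F 1 * (1 - cutP β (rho2 a b y))) =O[𝓝 x] rho2 a b := by
      refine Asymptotics.IsBigO.const_mul_left ?_ _
      refine Asymptotics.IsBigO.of_bound (2 / β) (Eventually.of_forall fun y => ?_)
      rw [Real.norm_eq_abs, Real.norm_eq_abs, abs_of_nonneg (rho2_nonneg y)]
      exact cutP_near hβ (rho2_nonneg y)
    refine (h5.add h6).congr' ?_ EventuallyEq.rfl
    filter_upwards [cu.continuousAt.eventually (Ioi_mem_nhds h)] with y hy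
    have hy : 0 < uu a b 2 y := hy
    simp [Dfun, cutPP, hy]
    ring

lemma cont_of_bigO {D N R : ℝ × ℝ → ℝ} {x : ℝ × ℝ} (h : D =O[𝓝 x] R) (hR : R x = 0)
    (hN : ContinuousAt N x) (hN0 : N x = 0) : ContinuousAt (fun y => D y * (N y / R y)) x := by
  have h1 : (fun y => D y * (N y / R y)) =O[𝓝 x] N := by
    obtain ⟨C, hC⟩ := h.bound
    refine Asymptotics.IsBigO.of_bound (max C 0) ?_
    filter_upwards [hC] with y hy
    by_cases h0 : R y = 0
    · rw [h0]; simp; positivity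
    · rw [norm_mul, norm_div]
      have h2 : 0 < ‖R y‖ := norm_pos_iff.2 h0
      calc ‖D y‖ * (‖N y‖ / ‖R y‖) ≤ (C * ‖R y‖) * (‖N y‖ / ‖R y‖) := by gcongr
        _ = C * ‖N y‖ := by field_simp
        _ ≤ max C 0 * ‖N y‖ := by gcongr; exact le_max_left _ _
  have h2 : Tendsto N (𝓝 x) (𝓝 0) := by rw [← hN0]; exact hN
  have h3 := h1.trans_tendsto h2
  unfold ContinuousAt
  simpa [hR] using h3

lemma A_cont (ha : ∀ i, ContDiff ℝ (⊤ : ℕ∞) (a i)) (hb : ∀ i, ContDiff ℝ (⊤ : ℕ∞) (b i))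
    (hne : ∀ x, ∃ i, uu a b i x ≠ 0)
    {β : ℝ} (hβ : 0 < β) (hsep : ∀ x, rho2 a b x ≤ β → uu a b 2 x ≠ 0)
    {F G : ℝ → ℝ} (hF : ∀ z, HasDerivAt F (G z) z) (hF0 : F (-1) = 0) :
    Continuous (fun x => Dfun a b β F (F 1) x * phT a b x) ∧
    Continuous (fun x => Dfun a b β F (F 1) x * phS a b x) := by
  have h1 := fun i => (ddiff (ha i)).continuous
  have h2 := fun i => (ddiff (hb i)).continuous
  have h3 := fun i => (uu_contDiff ha hb i).continuous
  constructor
  all_goals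
    rw [continuous_iff_continuousAt]
    intro x
    by_cases hx : rho2 a b x = 0
    · have e0 : uu a b 0 x = 0 := by
        unfold rho2 at hx; nlinarith [sq_nonneg (uu a b 0 x), sq_nonneg (uu a b 1 x)]
      have e1 : uu a b 1 x = 0 := by
        unfold rho2 at hx; nlinarith [sq_nonneg (uu a b 0 x), sq_nonneg (uu a b 1 x)]
      refine cont_of_bigO (D_bigO ha hb hne hβ hsep hF hF0 hx) hx ?_ ?_
      · apply Continuous.continuousAt; fun_prop
      · simp [e0, e1]
    · have hD := (D_diff ha hb hne hβ hsep hF (F 1) x).continuousAt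
      obtain ⟨hS, hT⟩ := ph_diff ha hb hx
      first
        | exact hD.mul hT.continuousAt
        | exact hD.mul hS.continuousAt

lemma deriv_per {c : ℝ → ℝ} (h : ∀ s, c (s + 1) = c s) (s : ℝ) : deriv c (s + 1) = deriv c s := by
  rw [← deriv_comp_add_const]
  congr 1
  funext s
  exact h s

lemma stokes_int (ha : ∀ i, ContDiff ℝ (⊤ : ℕ∞) (a i)) (hb : ∀ i, ContDiff ℝ (⊤ : ℕ∞) (b i))
    (hne : ∀ x, ∃ i, uu a b i x ≠ 0)
    (hpa : ∀ i s, a i (s + 1) = a i s) (hpb : ∀ i s, b i (s + 1) = b i s)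
    {β : ℝ} (hβ : 0 < β) (hsep : ∀ x, rho2 a b x ≤ β → uu a b 2 x ≠ 0)
    (hcount : {x | rho2 a b x = 0}.Countable)
    {G : ℝ → ℝ} (hG : Continuous G) (s0 t0 : ℝ) :
    ∫ x in Icc (s0, t0) (s0 + 1, t0 + 1), G (zz a b x) * JJ a b x =
      (∫ z in (-1)..1, G z) * ∫ x in Icc (s0, t0) (s0 + 1, t0 + 1), cutDD a b β x * dd a b x := by
  set F : ℝ → ℝ := fun z => ∫ w in (-1)..z, G w with hFdef
  have hF : ∀ z, HasDerivAt F (G z) z := fun z =>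
    intervalIntegral.integral_hasDerivAt_right (hG.intervalIntegrable _ _)
      (hG.stronglyMeasurableAtFilter _ _) hG.continuousAt
  have hF0 : F (-1) = 0 := by simp [hFdef]
  obtain ⟨cT, cS⟩ := A_cont ha hb hne hβ hsep hF hF0
  have c1 : Continuous fun x => G (zz a b x) * JJ a b x :=
    (hG.comp (zz_contDiff ha hb hne).continuous).mul (JJ_cont ha hb hne)
  have c2 : Continuous fun x => cutDD a b β x * dd a b x :=
    (cutDD_cont ha hb hβ hsep).mul (dd_cont ha hb)
  set f := fun x => Dfun a b β F (F 1) x * phT a b x with hf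
  set g := fun x => -(Dfun a b β F (F 1) x * phS a b x) with hg
  have hdf : ∀ x, rho2 a b x ≠ 0 → DifferentiableAt ℝ f x := fun x hx =>
    (D_diff ha hb hne hβ hsep hF (F 1) x).fun_mul (ph_diff ha hb hx).2
  have hdg : ∀ x, rho2 a b x ≠ 0 → DifferentiableAt ℝ g x := fun x hx =>
    ((D_diff ha hb hne hβ hsep hF (F 1) x).fun_mul (ph_diff ha hb hx).1).fun_neg
  set h := fun x => - (G (zz a b x) * JJ a b x) + F 1 * (cutDD a b β x * dd a b x) with hh
  have ch : Continuous h := c1.neg.add (continuous_const.mul c2)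
  have hae : ∀ᵐ x : ℝ × ℝ, h x = fderiv ℝ f x (1, 0) + fderiv ℝ g x (0, 1) := by
    have : ∀ᵐ x : ℝ × ℝ, x ∉ {x | rho2 a b x = 0} :=
      measure_eq_zero_iff_ae_notMem.1 (hcount.measure_zero volume)
    filter_upwards [this] with x hx
    exact (stokes_pointwise ha hb hne hβ hsep hF (F 1) hx).symm
  have hIntg : ∀ k : ℝ × ℝ → ℝ, Continuous k → IntegrableOn k (Icc (s0, t0) (s0 + 1, t0 + 1)) :=
    fun k hk => hk.continuousOn.integrableOn_compact isCompact_Icc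
  have main := integral_divergence_prod_Icc_of_hasFDerivAt_off_countable_of_le f g
    (fun x => fderiv ℝ f x) (fun x => fderiv ℝ g x) (s0, t0) (s0 + 1, t0 + 1)
    (by constructor <;> simp) {x | rho2 a b x = 0} hcount cT.continuousOn cS.neg.continuousOn
    (fun x hx => (hdf x hx.2).hasFDerivAt) (fun x hx => (hdg x hx.2).hasFDerivAt)
    ((hIntg h ch).congr (ae_restrict_of_ae hae))
  have e1 : ∫ x in Icc (s0, t0) (s0 + 1, t0 + 1), fderiv ℝ f x (1, 0) + fderiv ℝ g x (0, 1)
      = ∫ x in Icc (s0, t0) (s0 + 1, t0 + 1), h x :=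
    integral_congr_ae (ae_restrict_of_ae (hae.mono fun x hx => hx.symm))
  have pu1 : ∀ i s t, uu a b i (s + 1, t) = uu a b i (s, t) := fun i s t => by simp [uu, hpa]
  have pu2 : ∀ i s t, uu a b i (s, t + 1) = uu a b i (s, t) := fun i s t => by simp [uu, hpb]
  have pf : ∀ t, f (s0 + 1, t) = f (s0, t) := fun t => by
    simp only [hf, Dfun, phT, zz, rr, rho2, cutPP, pu1]
  have pg : ∀ s, g (s, t0 + 1) = g (s, t0) := fun s => by
    simp only [hg, Dfun, phS, zz, rr, rho2, cutPP, pu2]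
  simp only [e1, pf, pg] at main
  have e2 : ∫ x in Icc (s0, t0) (s0 + 1, t0 + 1), h x =
      (∫ x in Icc (s0, t0) (s0 + 1, t0 + 1), -(G (zz a b x) * JJ a b x)) +
      ∫ x in Icc (s0, t0) (s0 + 1, t0 + 1), F 1 * (cutDD a b β x * dd a b x) :=
    integral_add (hIntg _ c1.neg) (hIntg _ (continuous_const.mul c2))
  rw [e2, integral_neg, integral_const_mul] at main
  have : F 1 = ∫ z in (-1)..1, G z := rfl
  rw [← this]
  linarith

end stokes3

/-! ### Part 4: the local degree count -/

lemma local_inv {W : ℝ × ℝ → ℝ × ℝ} (hW : ContDiff ℝ 1 W) {p : ℝ × ℝ}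
    (hd : (fderiv ℝ W p).det ≠ 0) :
    ∃ U : Set (ℝ × ℝ), IsOpen U ∧ p ∈ U ∧ InjOn W U ∧ ∀ V ⊆ U, V ∈ 𝓝 p → W '' V ∈ 𝓝 (W p) := by
  let L : (ℝ × ℝ) ≃L[ℝ] (ℝ × ℝ) :=
    (fderiv ℝ W p).toContinuousLinearEquivOfDetNeZero hd
  have hs : HasStrictFDerivAt W (L : (ℝ × ℝ) →L[ℝ] (ℝ × ℝ)) p := by
    have := hW.contDiffAt.hasStrictFDerivAt (x := p) (by norm_num)
    rwa [ContinuousLinearMap.coe_toContinuousLinearEquivOfDetNeZero]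
  let e := hs.toOpenPartialHomeomorph W
  have he : (e : ℝ × ℝ → ℝ × ℝ) = W := hs.toOpenPartialHomeomorph_coe
  refine ⟨e.source, e.open_source, hs.mem_toOpenPartialHomeomorph_source, ?_, ?_⟩
  · rw [← he]; exact e.injOn
  · intro V _ hVp
    rw [← hs.map_nhds_eq_of_equiv]
    exact image_mem_map hVp

lemma sign_mul_abs' (x : ℝ) : Real.sign x * |x| = x := by
  rcases lt_trichotomy x 0 with h | h | h
  · rw [Real.sign_of_neg h, abs_of_neg h]; ring
  · subst h; simp
  · rw [Real.sign_of_pos h, abs_of_pos h]; ring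

open Classical in
lemma local_degree {W : ℝ × ℝ → ℝ × ℝ} (hW : ContDiff ℝ 1 W) {d : ℝ × ℝ → ℝ}
    (hd : ∀ x, (fderiv ℝ W x).det = d x) (hdc : Continuous d) {v : ℝ × ℝ → ℝ} (hv : Continuous v)
    {K : Set (ℝ × ℝ)} (hK : IsCompact K) (hz : ∀ x ∈ K, W x = 0 → v x ≠ 0)
    (hzi : ∀ x ∈ K, W x = 0 → 0 < v x → x ∈ interior K ∧ d x ≠ 0) :
    ∃ Z : Finset (ℝ × ℝ), (∀ x, x ∈ Z ↔ x ∈ K ∧ W x = 0 ∧ 0 < v x) ∧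
    ∃ β > 0, ∀ φ : ℝ × ℝ → ℝ, Continuous φ → (∀ y, φ y ≠ 0 → ‖y‖ < β) →
      ∫ x in K, (if 0 < v x then φ (W x) else 0) * d x = (∑ p ∈ Z, Real.sign (d p)) * ∫ y, φ y := by
  have hWc := hW.continuous
  set Z0 : Set (ℝ × ℝ) := {x | x ∈ K ∧ W x = 0 ∧ 0 < v x} with hZ0
  have hZ0c : IsCompact Z0 := by
    have : Z0 = K ∩ (W ⁻¹' {0} ∩ v ⁻¹' Ici 0) := by
      ext x
      simp only [hZ0, mem_ofPred_eq, mem_inter_iff, mem_preimage, mem_singleton_iff, mem_Ici]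
      constructor
      · rintro ⟨h1, h2, h3⟩; exact ⟨h1, h2, h3.le⟩
      · rintro ⟨h1, h2, h3⟩; exact ⟨h1, h2, lt_of_le_of_ne h3 (hz x h1 h2).symm⟩
    rw [this]
    exact hK.inter_right ((isClosed_singleton.preimage hWc).inter (isClosed_Ici.preimage hv))
  -- good neighbourhoods
  have key : ∀ p ∈ Z0, ∃ U : Set (ℝ × ℝ), IsOpen U ∧ p ∈ U ∧ InjOn W U ∧
      (∀ V ⊆ U, V ∈ 𝓝 p → W '' V ∈ 𝓝 (W p)) ∧ U ⊆ K ∧ (∀ x ∈ U, 0 < v x) ∧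
      ∀ x ∈ U, Real.sign (d x) = Real.sign (d p) := by
    rintro p ⟨hpK, hp0, hpv⟩
    obtain ⟨hpi, hdp⟩ := hzi p hpK hp0 hpv
    obtain ⟨U, hU, hpU, hinj, hop⟩ := local_inv hW (p := p) (by rw [hd]; exact hdp)
    have hs : {x | 0 < d x * d p} ∈ 𝓝 p := by
      refine (isOpen_lt continuous_const (hdc.mul continuous_const)).mem_nhds ?_
      have := mul_self_pos.2 hdp
      exact this
    refine ⟨U ∩ (interior K ∩ ({x | 0 < v x} ∩ {x | 0 < d x * d p})), ?_, ?_, ?_, ?_, ?_, ?_, ?_⟩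
    · exact hU.inter (isOpen_interior.inter ((isOpen_lt continuous_const hv).inter
        (isOpen_lt continuous_const (hdc.mul continuous_const))))
    · exact ⟨hpU, hpi, hpv, mem_of_mem_nhds hs⟩
    · exact hinj.mono inter_subset_left
    · intro V hV; exact hop V (hV.trans inter_subset_left)
    · intro x hx; exact interior_subset hx.2.1
    · intro x hx; exact hx.2.2.1
    · intro x hx
      have h1 : 0 < d x * d p := hx.2.2.2
      rcases pos_and_pos_or_neg_and_neg_of_mul_pos h1 with ⟨h2, h3⟩ | ⟨h2, h3⟩
      · rw [Real.sign_of_pos h2, Real.sign_of_pos h3]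
      · rw [Real.sign_of_neg h2, Real.sign_of_neg h3]
  choose! U hUo hpU hinj hop hUK hUv hUs using key
  have hfin : Z0.Finite := by
    obtain ⟨t, htZ, ht⟩ := hZ0c.elim_nhds_subcover U (fun p hp => (hUo p hp).mem_nhds (hpU p hp))
    refine t.finite_toSet.subset ?_
    intro z hz
    obtain ⟨p, hpt, hzp⟩ := mem_iUnion₂.1 (ht hz)
    have hp := htZ p hpt
    have : z = p := hinj p hp hzp (hpU p hp) (by rw [hz.2.1, hp.2.1])
    rw [this]; exact hpt
  obtain ⟨T, hT, hTd⟩ := hfin.t2_separation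
  set V : ℝ × ℝ → Set (ℝ × ℝ) := fun p => U p ∩ T p with hVdef
  have hVo : ∀ p ∈ Z0, IsOpen (V p) := fun p hp => (hUo p hp).inter (hT p).2
  have hpV : ∀ p ∈ Z0, p ∈ V p := fun p hp => ⟨hpU p hp, (hT p).1⟩
  set Z := hfin.toFinset with hZ
  have hmem : ∀ x, x ∈ Z ↔ x ∈ Z0 := fun x => hfin.mem_toFinset
  refine ⟨Z, hmem, ?_⟩
  -- lower bound off the neighbourhoods
  have hβ1 : ∃ β > 0, ∀ x ∈ K, 0 ≤ v x → (∀ p ∈ Z, x ∉ V p) → β ≤ ‖W x‖ := by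
    set C : Set (ℝ × ℝ) := K ∩ (v ⁻¹' Ici 0 ∩ (⋃ p ∈ Z, V p)ᶜ) with hC
    have hCc : IsCompact C := by
      refine hK.inter_right ((isClosed_Ici.preimage hv).inter (IsOpen.isClosed_compl ?_))
      exact isOpen_biUnion fun p hp => hVo p ((hmem p).1 hp)
    rcases C.eq_empty_or_nonempty with h | h
    · refine ⟨1, one_pos, fun x hx hvx hnx => ?_⟩
      exfalso
      have : x ∈ C := ⟨hx, hvx, by simpa using hnx⟩
      rw [h] at this; exact this
    · obtain ⟨x0, hx0, hmin⟩ := hCc.exists_isMinOn h hWc.norm.continuousOn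
      refine ⟨‖W x0‖, ?_, fun x hx hvx hnx => hmin ⟨hx, hvx, by simpa using hnx⟩⟩
      rw [gt_iff_lt, norm_pos_iff]
      intro h0
      have hx0Z : x0 ∈ Z0 := ⟨hx0.1, h0, lt_of_le_of_ne hx0.2.1 (hz x0 hx0.1 h0).symm⟩
      exact hx0.2.2 (mem_biUnion ((hmem x0).2 hx0Z) (hpV x0 hx0Z))
  obtain ⟨β1, hβ1, hlow⟩ := hβ1
  have hball : ∀ᶠ β in 𝓝[>] (0:ℝ), ∀ p ∈ Z, Metric.ball 0 β ⊆ W '' V p := by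
    rw [Filter.eventually_all_finset]
    intro p hp
    have hp := (hmem p).1 hp
    have h1 := hop p hp (V p) inter_subset_left ((hVo p hp).mem_nhds (hpV p hp))
    rw [hp.2.1] at h1
    obtain ⟨r, hr, hrs⟩ := Metric.mem_nhds_iff.1 h1
    filter_upwards [Ioo_mem_nhdsGT hr] with β hβ
    exact (Metric.ball_subset_ball hβ.2.le).trans hrs
  obtain ⟨β, hβb, hβ⟩ := (hball.and (Ioo_mem_nhdsGT hβ1)).exists
  refine ⟨β, hβ.1, fun φ hφ hsupp => ?_⟩
  have cφ : Continuous fun x => φ (W x) * d x := (hφ.comp hWc).mul hdc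
  have hKm := hK.measurableSet
  have step1 : ∫ x in K, (if 0 < v x then φ (W x) else 0) * d x =
      ∫ x in K, ∑ p ∈ Z, (V p).indicator (fun x => φ (W x) * d x) x := by
    refine setIntegral_congr_fun hKm fun x hx => ?_
    by_cases hxV : ∃ p ∈ Z, x ∈ V p
    · obtain ⟨p, hp, hxp⟩ := hxV
      rw [Finset.sum_eq_single_of_mem p hp]
      · rw [indicator_of_mem hxp, if_pos (hUv p ((hmem p).1 hp) x hxp.1)]
      · intro q hq hqp
        rw [indicator_of_notMem]
        intro hxq
        exact (disjoint_left.1 (hTd ((hmem q).1 hq) ((hmem p).1 hp) hqp)) hxq.2 hxp.2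
    · push Not at hxV
      rw [Finset.sum_eq_zero (fun p hp => indicator_of_notMem (hxV p hp) _)]
      split_ifs with h
      · have h1 := hlow x hx h.le hxV
        have : φ (W x) = 0 := by
          by_contra h2
          have := hsupp _ h2
          linarith [hβ.2]
        rw [this, zero_mul]
      · rw [zero_mul]
  rw [step1, integral_finsetSum, Finset.sum_mul]
  · refine Finset.sum_congr rfl fun p hp => ?_
    have hp' := (hmem p).1 hp
    have hVm := (hVo p hp').measurableSet
    rw [setIntegral_indicator hVm, inter_eq_right.2 (inter_subset_left.trans (hUK p hp'))]
    have e1 : ∫ x in V p, φ (W x) * d x =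
        Real.sign (d p) * ∫ x in V p, |(fderiv ℝ W x).det| • φ (W x) := by
      rw [← integral_const_mul]
      refine setIntegral_congr_fun hVm fun x hx => ?_
      simp only [hd, smul_eq_mul]
      rw [← hUs p hp' x hx.1]
      calc φ (W x) * d x = φ (W x) * (Real.sign (d x) * |d x|) := by rw [sign_mul_abs']
        _ = _ := by ring
    rw [e1, ← integral_image_eq_integral_abs_det_fderiv_smul volume hVm
      (fun x _ => ((hW.differentiable (by norm_num)) x).hasFDerivAt.hasFDerivWithinAt)
      ((hinj p hp').mono inter_subset_left)]
    rw [setIntegral_eq_integral_of_forall_compl_eq_zero]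
    intro y hy
    by_contra h
    exact hy (hβb p hp (by simpa using hsupp y h))
  · intro p hp
    exact (cφ.continuousOn.integrableOn_compact hK).indicator (hVo p ((hmem p).1 hp)).measurableSet

/-- total mass of the cutoff density -/
lemma cutD_mass {β : ℝ} (hβ : 0 < β) :
    ∫ y : ℝ × ℝ, cutD β (y.1 ^ 2 + y.2 ^ 2) = 2 * Real.pi := by
  rw [← integral_comp_polarCoord_symm]
  have e : ∀ p : ℝ × ℝ, p.1 • cutD β ((polarCoord.symm p).1 ^ 2 + (polarCoord.symm p).2 ^ 2)
      = (p.1 * cutD β (p.1 ^ 2)) * 1 := by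
    intro p
    have : (polarCoord.symm p).1 ^ 2 + (polarCoord.symm p).2 ^ 2 = p.1 ^ 2 := by
      simp only [polarCoord_symm_apply]
      linear_combination p.1 ^ 2 * Real.sin_sq_add_cos_sq p.2
    rw [this]; simp
  simp only [e]
  rw [polarCoord_target, Measure.volume_eq_prod,
    setIntegral_prod_mul (fun r : ℝ => r * cutD β (r ^ 2)) (fun _ => (1:ℝ))]
  have h1 : ∫ r in Ioi (0:ℝ), r * cutD β (r ^ 2) = 1 := by
    have hd : ∀ x ∈ Ici (0:ℝ), HasDerivAt (fun r => -cutP β (r ^ 2)) (x * cutD β (x ^ 2)) x := by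
      intro x _
      have := ((cutP_hasDerivAt β (x ^ 2)).comp x (hasDerivAt_pow 2 x)).neg
      refine this.congr_deriv ?_
      push_cast; ring
    have hlim : Tendsto (fun r => -cutP β (r ^ 2)) atTop (𝓝 0) := by
      refine tendsto_const_nhds.congr' ?_
      filter_upwards [eventually_ge_atTop (max 1 β)] with r hr
      have h1 : 1 ≤ r := (le_max_left _ _).trans hr
      have h2 : β ≤ r := (le_max_right _ _).trans hr
      rw [cutP_zero hβ (by nlinarith)]; simp
    have := integral_Ioi_of_hasDerivAt_of_nonneg' hd (fun x hx => ?_) hlim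
    · rw [this]; simp [cutP]
    · have hx : (0:ℝ) < x := hx
      have : 0 ≤ cutD β (x ^ 2) := by unfold cutD; positivity
      positivity
  rw [h1]
  simp
  rw [max_eq_left (by positivity)]
  ring

/-! ### Part 5: counting crossings -/

section count
variable {a b : Fin 3 → ℝ → ℝ}

/-- the planar difference map -/
def WW (a b : Fin 3 → ℝ → ℝ) (x : ℝ × ℝ) : ℝ × ℝ := (uu a b 0 x, uu a b 1 x)

lemma WW_contDiff (ha : ∀ i, ContDiff ℝ (⊤ : ℕ∞) (a i)) (hb : ∀ i, ContDiff ℝ (⊤ : ℕ∞) (b i)) :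
    ContDiff ℝ 1 (WW a b) := by
  unfold WW
  exact ((uu_contDiff ha hb 0).prodMk (uu_contDiff ha hb 1)).of_le (by norm_cast)

lemma WW_det (ha : ∀ i, ContDiff ℝ (⊤ : ℕ∞) (a i)) (hb : ∀ i, ContDiff ℝ (⊤ : ℕ∞) (b i))
    (x : ℝ × ℝ) : (fderiv ℝ (WW a b) x).det = dd a b x := by
  have h0 := fun i => (uu_contDiff ha hb i).differentiable (by simp) x
  have e : fderiv ℝ (WW a b) x = (fderiv ℝ (uu a b 0) x).prod (fderiv ℝ (uu a b 1) x) :=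
    ((h0 0).hasFDerivAt.prodMk (h0 1).hasFDerivAt).fderiv
  have e1 : ∀ i, fderiv ℝ (uu a b i) x (1, 0) = -deriv (a i) x.1 := fun i =>
    fderivA_fst (h0 i) (uu_s ha i x.1 x.2)
  have e2 : ∀ i, fderiv ℝ (uu a b i) x (0, 1) = deriv (b i) x.2 := fun i =>
    fderivA_snd (h0 i) (uu_t hb i x.1 x.2)
  rw [e, ContinuousLinearMap.det, ← LinearMap.det_toMatrix (Module.Basis.finTwoProd ℝ),
    Matrix.det_fin_two]
  simp only [LinearMap.toMatrix_apply, Module.Basis.finTwoProd_zero, Module.Basis.finTwoProd_one,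
    ContinuousLinearMap.coe_coe, ContinuousLinearMap.prod_apply, e1, e2,
    Module.Basis.coe_finTwoProd_repr]
  simp [dd]
  ring

lemma WW_zero {x : ℝ × ℝ} : WW a b x = 0 ↔ rho2 a b x = 0 := by
  unfold WW rho2
  rw [Prod.ext_iff]
  constructor
  · rintro ⟨h1, h2⟩
    simp only [Prod.fst_zero, Prod.snd_zero] at h1 h2
    rw [h1, h2]; norm_num
  · intro h
    constructor
    · simp only [Prod.fst_zero]; nlinarith [sq_nonneg (uu a b 0 x), sq_nonneg (uu a b 1 x)]
    · simp only [Prod.snd_zero]; nlinarith [sq_nonneg (uu a b 0 x), sq_nonneg (uu a b 1 x)]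

lemma zeros_countable (ha : ∀ i, ContDiff ℝ (⊤ : ℕ∞) (a i)) (hb : ∀ i, ContDiff ℝ (⊤ : ℕ∞) (b i))
    (htr : ∀ x, rho2 a b x = 0 → dd a b x ≠ 0) : {x | rho2 a b x = 0}.Countable := by
  have key : ∀ p : ℝ × ℝ, rho2 a b p = 0 → ∃ U : Set (ℝ × ℝ), U ∈ 𝓝 p ∧ InjOn (WW a b) U := by
    intro p hp
    obtain ⟨U, hU, hpU, hinj, -⟩ := local_inv (WW_contDiff ha hb) (p := p)
      (by rw [WW_det ha hb]; exact htr p hp)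
    exact ⟨U, hU.mem_nhds hpU, hinj⟩
  choose! U hU hinj using key
  obtain ⟨t, hts, htc, ht⟩ := TopologicalSpace.countable_cover_nhdsWithin
    (s := {x | rho2 a b x = 0}) (f := U) (fun x hx => mem_nhdsWithin_of_mem_nhds (hU x hx))
  refine htc.mono fun z hz => ?_
  obtain ⟨p, hpt, hzp⟩ := mem_iUnion₂.1 (ht hz)
  have hp := hts hpt
  have : z = p := hinj p hp hzp (mem_of_mem_nhds (hU p hp))
    (by rw [WW_zero.2 hz, WW_zero.2 hp])
  rw [this]; exact hpt

lemma per_fract {c : ℝ → ℝ} (h : ∀ s, c (s + 1) = c s) (s : ℝ) : c (Int.fract s) = c s := by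
  have hp : Function.Periodic c 1 := h
  have := hp.sub_int_mul_eq (x := s) ⌊s⌋
  rw [mul_one] at this
  exact this

lemma exists_sep (ha : ∀ i, ContDiff ℝ (⊤ : ℕ∞) (a i)) (hb : ∀ i, ContDiff ℝ (⊤ : ℕ∞) (b i))
    (hne : ∀ x, ∃ i, uu a b i x ≠ 0)
    (hpa : ∀ i s, a i (s + 1) = a i s) (hpb : ∀ i s, b i (s + 1) = b i s) :
    ∃ β > 0, ∀ x, rho2 a b x ≤ β → uu a b 2 x ≠ 0 := by
  have hred : ∀ i x, uu a b i (Int.fract x.1, Int.fract x.2) = uu a b i x := by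
    intro i x
    simp only [uu, per_fract (hpa i), per_fract (hpb i)]
  have hred2 : ∀ x, rho2 a b (Int.fract x.1, Int.fract x.2) = rho2 a b x := by
    intro x; simp only [rho2, hred]
  have hmem : ∀ x : ℝ × ℝ, (Int.fract x.1, Int.fract x.2) ∈ Icc ((0:ℝ), (0:ℝ)) (1, 1) := by
    intro x
    exact ⟨⟨Int.fract_nonneg _, Int.fract_nonneg _⟩,
      ⟨(Int.fract_lt_one _).le, (Int.fract_lt_one _).le⟩⟩
  set C : Set (ℝ × ℝ) := Icc ((0:ℝ), (0:ℝ)) (1, 1) ∩ uu a b 2 ⁻¹' {0} with hC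
  have hCc : IsCompact C :=
    isCompact_Icc.inter_right (isClosed_singleton.preimage (uu_contDiff ha hb 2).continuous)
  rcases C.eq_empty_or_nonempty with h | h
  · refine ⟨1, one_pos, fun x _ hx => ?_⟩
    have : (Int.fract x.1, Int.fract x.2) ∈ C := ⟨hmem x, by simp [hred, hx]⟩
    rw [h] at this; exact this
  · obtain ⟨x0, hx0, hmin⟩ := hCc.exists_isMinOn h (rho2_contDiff ha hb).continuous.continuousOn
    have hpos : 0 < rho2 a b x0 := by
      have h1 := rr_pos (hne x0)
      have h2 := rr_sq (a := a) (b := b) x0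
      have h3 : uu a b 2 x0 = 0 := hx0.2
      rw [h3] at h2
      have : 0 < rr a b x0 ^ 2 := by positivity
      linarith
    refine ⟨rho2 a b x0 / 2, by positivity, fun x hx hx2 => ?_⟩
    have h1 : (Int.fract x.1, Int.fract x.2) ∈ C := ⟨hmem x, by simp [hred, hx2]⟩
    have h2 : rho2 a b x0 ≤ rho2 a b (Int.fract x.1, Int.fract x.2) := hmin h1
    rw [hred2] at h2
    linarith

/-- The Gauss integral over a generic shifted square. -/
lemma gauss_count (ha : ∀ i, ContDiff ℝ (⊤ : ℕ∞) (a i)) (hb : ∀ i, ContDiff ℝ (⊤ : ℕ∞) (b i))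
    (hne : ∀ x, ∃ i, uu a b i x ≠ 0)
    (hpa : ∀ i s, a i (s + 1) = a i s) (hpb : ∀ i s, b i (s + 1) = b i s)
    (htr : ∀ x, rho2 a b x = 0 → dd a b x ≠ 0)
    {G : ℝ → ℝ} (hG : Continuous G) :
    ∃ s0 t0 : ℝ, ∃ Z : Finset (ℝ × ℝ),
      (∀ x, x ∈ Z ↔ x ∈ Ico s0 (s0 + 1) ×ˢ Ico t0 (t0 + 1) ∧ rho2 a b x = 0 ∧ 0 < uu a b 2 x) ∧
      ∫ x in Icc (s0, t0) (s0 + 1, t0 + 1), G (zz a b x) * JJ a b x =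
        (2 * Real.pi * ∫ z in (-1)..1, G z) * ∑ p ∈ Z, Real.sign (dd a b p) := by
  classical
  have hcount := zeros_countable ha hb htr
  have ex : ∀ S : Set ℝ, S.Countable → ∃ s, s ∉ S := fun S hS => by
    by_contra h
    push Not at h
    exact Cardinal.not_countable_real ((eq_univ_of_forall h) ▸ hS)
  obtain ⟨s0, hs0⟩ := ex _ (hcount.image Prod.fst)
  obtain ⟨t0, ht0⟩ := ex _ (hcount.image Prod.snd)
  have hs0' : ∀ x, rho2 a b x = 0 → x.1 ≠ s0 := fun x hx h => hs0 ⟨x, hx, h⟩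
  have ht0' : ∀ x, rho2 a b x = 0 → x.2 ≠ t0 := fun x hx h => ht0 ⟨x, hx, h⟩
  have hs1 : ∀ x, rho2 a b x = 0 → x.1 ≠ s0 + 1 := fun x hx h => by
    refine hs0' (s0, x.2) ?_ rfl
    simpa [rho2, uu, h, hpa] using hx
  have ht1 : ∀ x, rho2 a b x = 0 → x.2 ≠ t0 + 1 := fun x hx h => by
    refine ht0' (x.1, t0) ?_ rfl
    simpa [rho2, uu, h, hpb] using hx
  have hz : ∀ x, WW a b x = 0 → uu a b 2 x ≠ 0 := by
    intro x hx h2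
    obtain ⟨i, hi⟩ := hne x
    have h0 : uu a b 0 x = 0 := congrArg Prod.fst hx
    have h1 : uu a b 1 x = 0 := congrArg Prod.snd hx
    fin_cases i
    · exact hi h0
    · exact hi h1
    · exact hi h2
  obtain ⟨Z, hZ, β0, hβ0, hdeg⟩ := local_degree (WW_contDiff ha hb) (WW_det ha hb) (dd_cont ha hb)
    (uu_contDiff ha hb 2).continuous (K := Icc (s0, t0) (s0 + 1, t0 + 1)) isCompact_Icc
    (fun x _ => hz x) (by
      intro x hx hx0 _
      have hr := WW_zero.1 hx0
      refine ⟨?_, htr x hr⟩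
      rw [← Icc_prod_Icc, interior_prod_eq, interior_Icc, interior_Icc]
      obtain ⟨⟨h1, h2⟩, h3, h4⟩ := hx
      exact ⟨⟨lt_of_le_of_ne h1 (hs0' x hr).symm, lt_of_le_of_ne h3 (hs1 x hr)⟩,
        ⟨lt_of_le_of_ne h2 (ht0' x hr).symm, lt_of_le_of_ne h4 (ht1 x hr)⟩⟩)
  refine ⟨s0, t0, Z, fun x => ?_, ?_⟩
  · rw [hZ, WW_zero]
    constructor
    · rintro ⟨⟨⟨h1, h2⟩, h3, h4⟩, hr, hv⟩
      exact ⟨⟨⟨h1, lt_of_le_of_ne h3 (hs1 x hr)⟩, ⟨h2, lt_of_le_of_ne h4 (ht1 x hr)⟩⟩, hr, hv⟩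
    · rintro ⟨⟨h1, h2⟩, hr, hv⟩
      exact ⟨⟨⟨h1.1, h2.1⟩, ⟨h1.2.le, h2.2.le⟩⟩, hr, hv⟩
  · obtain ⟨β1, hβ1, hsep⟩ := exists_sep ha hb hne hpa hpb
    set β := min β1 (β0 ^ 2) with hβdef
    have hβ : 0 < β := lt_min hβ1 (by positivity)
    rw [stokes_int ha hb hne hpa hpb hβ (fun x hx => hsep x (hx.trans (min_le_left _ _)))
      hcount hG s0 t0]
    have h1 := hdeg (fun y => cutD β (y.1 ^ 2 + y.2 ^ 2))
      ((cutD_cont β).comp (by fun_prop)) (by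
        intro y hy
        have h2 : y.1 ^ 2 + y.2 ^ 2 < β := by
          by_contra h
          exact hy (cutD_zero hβ (not_lt.1 h))
        have h3 : β ≤ β0 ^ 2 := min_le_right _ _
        rw [Prod.norm_def, max_lt_iff, Real.norm_eq_abs, Real.norm_eq_abs]
        constructor
        · exact abs_lt_of_sq_lt_sq (by nlinarith [sq_nonneg y.2]) hβ0.le
        · exact abs_lt_of_sq_lt_sq (by nlinarith [sq_nonneg y.1]) hβ0.le)
    rw [cutD_mass hβ] at h1
    have h2 : ∫ x in Icc (s0, t0) (s0 + 1, t0 + 1), cutDD a b β x * dd a b x =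
        (∑ p ∈ Z, Real.sign (dd a b p)) * (2 * Real.pi) := by
      rw [← h1]
      refine integral_congr_ae (Eventually.of_forall fun x => ?_)
      simp only [cutDD, WW, rho2]
    rw [h2]; ring
end count

/-! ### Part 6: Archimedes -/

lemma sphere_int (k : E3 → ℝ) :
    ∫ v : E3, k (‖v‖⁻¹ • v) * (Iio (1:ℝ)).indicator (fun _ => (1:ℝ)) ‖v‖ =
      (∫ v : Metric.sphere (0 : E3) 1, k v ∂((volume : Measure E3).toSphere)) * (1 / 3) := by
  have hdim : Module.finrank ℝ E3 = 3 := by simp [E3]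
  have h1 : ∫ v : E3, k (‖v‖⁻¹ • v) * (Iio (1:ℝ)).indicator (fun _ => (1:ℝ)) ‖v‖ =
      ∫ x : ({(0 : E3)}ᶜ : Set E3), k (‖x.1‖⁻¹ • x.1) *
        (Iio (1:ℝ)).indicator (fun _ => (1:ℝ)) ‖x.1‖ ∂((volume : Measure E3).comap (↑)) := by
    rw [integral_subtype_comap (measurableSet_singleton _).compl
      fun v : E3 => k (‖v‖⁻¹ • v) * (Iio (1:ℝ)).indicator (fun _ => (1:ℝ)) ‖v‖,
        restrict_compl_singleton]
  have h2 := (volume : Measure E3).measurePreserving_homeomorphUnitSphereProd.integral_comp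
    (Homeomorph.measurableEmbedding _)
    (fun q : Metric.sphere (0 : E3) 1 × Ioi (0:ℝ) => k q.1 *
      (Iio (1:ℝ)).indicator (fun _ => (1:ℝ)) q.2.1)
  simp only [homeomorphUnitSphereProd_apply_snd_coe, homeomorphUnitSphereProd_apply_fst_coe] at h2
  rw [h1, h2]
  rw [integral_prod_mul (fun v : Metric.sphere (0 : E3) 1 => k v)
    (fun r : Ioi (0:ℝ) => (Iio (1:ℝ)).indicator (fun _ => (1:ℝ)) r.1)]
  congr 1
  have h3 : (fun r : Ioi (0:ℝ) => (Iio (1:ℝ)).indicator (fun _ => (1:ℝ)) r.1) =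
      (Iio (⟨1, mem_Ioi.2 one_pos⟩ : Ioi (0:ℝ))).indicator fun _ => (1:ℝ) := by
    funext r
    simp only [indicator, mem_Iio]
    congr 1
  rw [h3, integral_indicator_const _ measurableSet_Iio, measureReal_def,
    Measure.volumeIoiPow_apply_Iio, hdim]
  norm_num

/-- `E3` as `ℝ × (ℝ × ℝ)`, with the third coordinate first. -/
lemma int_E3 (H : ℝ × (ℝ × ℝ) → ℝ) : ∫ v : E3, H (v 2, (v 0, v 1)) = ∫ q, H q := by
  have m1 := EuclideanSpace.volume_preserving_symm_measurableEquiv_toLp (Fin 3)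
  have m2 := volume_preserving_piFinSuccAbove (fun _ : Fin 3 => ℝ) 2
  have m3 := (MeasurePreserving.id (volume : Measure ℝ)).prod (volume_preserving_finTwoArrow ℝ)
  let e3 := (MeasurableEquiv.refl ℝ).prodCongr (MeasurableEquiv.finTwoArrow (α := ℝ))
  have m3' : MeasurePreserving e3 := m3
  have m := (m3'.comp (m2.comp m1))
  have := m.integral_comp (e3.measurableEmbedding.comp
    ((MeasurableEquiv.measurableEmbedding _).comp (MeasurableEquiv.measurableEmbedding _))) H
  rw [← this]
  rfl

/-- the test integrand -/
def HH (G : ℝ → ℝ) (z ρ : ℝ) : ℝ :=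
  G (z / √(ρ ^ 2 + z ^ 2)) * (Iio (1:ℝ)).indicator (fun _ => (1:ℝ)) (√(ρ ^ 2 + z ^ 2))

lemma HH_bound {G : ℝ → ℝ} (hG : Continuous G) : ∃ M, ∀ z ρ, |HH G z ρ| ≤ M := by
  obtain ⟨M, hM⟩ := (isCompact_Icc (a := (-1:ℝ)) (b := 1)).exists_bound_of_continuousOn
    hG.continuousOn
  refine ⟨M, fun z ρ => ?_⟩
  have h1 : z / √(ρ ^ 2 + z ^ 2) ∈ Icc (-1:ℝ) 1 := by
    have : |z| ≤ √(ρ ^ 2 + z ^ 2) := Real.abs_le_sqrt (by nlinarith [sq_nonneg ρ])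
    rw [mem_Icc, ← abs_le, abs_div, abs_of_nonneg (Real.sqrt_nonneg _)]
    exact div_le_one_of_le₀ this (Real.sqrt_nonneg _)
  have h2 := hM _ h1
  rw [Real.norm_eq_abs] at h2
  unfold HH
  rw [abs_mul]
  have h3 : |(Iio (1:ℝ)).indicator (fun _ => (1:ℝ)) (√(ρ ^ 2 + z ^ 2))| ≤ 1 := by
    by_cases h : √(ρ ^ 2 + z ^ 2) ∈ Iio (1:ℝ)
    · rw [indicator_of_mem h]; simp
    · rw [indicator_of_notMem h]; simp
  calc _ ≤ M * 1 := mul_le_mul h2 h3 (abs_nonneg _) ((abs_nonneg _).trans h2)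
    _ = M := mul_one M

lemma HH_meas {G : ℝ → ℝ} (hG : Continuous G) : Measurable (fun p : ℝ × ℝ => HH G p.1 p.2) := by
  unfold HH
  refine (hG.measurable.comp (by fun_prop)).mul ?_
  exact (measurable_const.indicator measurableSet_Iio).comp (by fun_prop)

lemma HH_supp {G : ℝ → ℝ} {z ρ : ℝ} (h : HH G z ρ ≠ 0) : ρ ^ 2 + z ^ 2 < 1 := by
  by_contra h1
  apply h
  unfold HH
  rw [indicator_of_notMem, mul_zero]
  rw [mem_Iio, not_lt]
  exact Real.one_le_sqrt.2 (not_lt.1 h1)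

lemma abs_le_one_of_sq {x y : ℝ} (h : x ^ 2 + y ^ 2 < 1) : |x| ≤ 1 ∧ |y| ≤ 1 :=
  ⟨abs_le_one_iff_mul_self_le_one.2 (by nlinarith [sq_nonneg y]),
    abs_le_one_iff_mul_self_le_one.2 (by nlinarith [sq_nonneg x])⟩

lemma archimedes {G : ℝ → ℝ} (hG : Continuous G) :
    ∫ v : Metric.sphere (0 : E3) 1, G ((v : E3) 2) ∂((volume : Measure E3).toSphere) =
      2 * Real.pi * ∫ z in (-1)..1, G z := by
  obtain ⟨M, hM⟩ := HH_bound hG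
  have hmeas := HH_meas hG
  -- step 1: go to the ball
  have h1 := sphere_int (fun v => G (v 2))
  have h2 : ∀ v : E3, G ((‖v‖⁻¹ • v) 2) * (Iio (1:ℝ)).indicator (fun _ => (1:ℝ)) ‖v‖ =
      (fun q : ℝ × (ℝ × ℝ) => HH G q.1 (√(q.2.1 ^ 2 + q.2.2 ^ 2))) (v 2, (v 0, v 1)) := by
    intro v
    have hn : ‖v‖ = √(√(v 0 ^ 2 + v 1 ^ 2) ^ 2 + v 2 ^ 2) := by
      rw [EuclideanSpace.norm_eq, Fin.sum_univ_three, Real.sq_sqrt (by positivity)]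
      simp
    unfold HH
    simp only [← hn, PiLp.smul_apply, smul_eq_mul]
    rw [div_eq_inv_mul]
  simp only [h2] at h1
  have hE := int_E3 (fun q : ℝ × (ℝ × ℝ) => HH G q.1 (√(q.2.1 ^ 2 + q.2.2 ^ 2)))
  simp only at hE
  rw [hE] at h1
  -- step 2: cylindrical coordinates
  have h3 : ∫ q : ℝ × (ℝ × ℝ), HH G q.1 (√(q.2.1 ^ 2 + q.2.2 ^ 2)) =
      ∫ z, ∫ y : ℝ × ℝ, HH G z (√(y.1 ^ 2 + y.2 ^ 2)) := by
    rw [Measure.volume_eq_prod, integral_prod]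
    have hm : Measurable fun q : ℝ × (ℝ × ℝ) => HH G q.1 (√(q.2.1 ^ 2 + q.2.2 ^ 2)) :=
      hmeas.comp (by fun_prop : Measurable fun q : ℝ × (ℝ × ℝ) => (q.1, √(q.2.1 ^ 2 + q.2.2 ^ 2)))
    have : IntegrableOn (fun q : ℝ × (ℝ × ℝ) => HH G q.1 (√(q.2.1 ^ 2 + q.2.2 ^ 2)))
        (Icc (-1, (-1, -1)) (1, (1, 1))) := by
      refine Measure.integrableOn_of_bounded (M := M) isCompact_Icc.measure_lt_top.ne
        hm.aestronglyMeasurable ?_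
      exact Eventually.of_forall fun q => hM _ _
    refine (integrableOn_iff_integrable_of_support_subset ?_).1 this
    intro q hq
    have h := HH_supp hq
    rw [Real.sq_sqrt (by positivity)] at h
    have ha := abs_le_one_of_sq (x := q.2.1) (y := q.2.2) (by nlinarith [sq_nonneg q.1])
    have hb := abs_le_one_of_sq (x := q.1) (y := q.2.2) (by nlinarith [sq_nonneg q.2.1])
    simp only [abs_le] at ha hb
    exact ⟨⟨hb.1.1, ha.1.1, ha.2.1⟩, ⟨hb.1.2, ha.1.2, ha.2.2⟩⟩
  have h4 : ∀ z, ∫ y : ℝ × ℝ, HH G z (√(y.1 ^ 2 + y.2 ^ 2)) =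
      (∫ ρ in Ioi (0:ℝ), ρ * HH G z ρ) * (2 * Real.pi) := by
    intro z
    rw [← integral_comp_polarCoord_symm]
    have e : ∀ p ∈ polarCoord.target, p.1 • HH G z (√((polarCoord.symm p).1 ^ 2 +
        (polarCoord.symm p).2 ^ 2)) = (p.1 * HH G z p.1) * 1 := by
      intro p hp
      have hp1 : 0 < p.1 := hp.1
      have : (polarCoord.symm p).1 ^ 2 + (polarCoord.symm p).2 ^ 2 = p.1 ^ 2 := by
        simp only [polarCoord_symm_apply]
        linear_combination p.1 ^ 2 * Real.sin_sq_add_cos_sq p.2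
      rw [this, Real.sqrt_sq hp1.le]; simp
    rw [setIntegral_congr_fun polarCoord.open_target.measurableSet e]
    rw [polarCoord_target, Measure.volume_eq_prod,
      setIntegral_prod_mul (fun r : ℝ => r * HH G z r) (fun _ => (1:ℝ))]
    congr 1
    simp
    rw [max_eq_left (by positivity)]
    ring
  -- step 3: back to the half plane
  have h5 : ∫ z, ∫ ρ in Ioi (0:ℝ), ρ * HH G z ρ =
      ∫ p : ℝ × ℝ, (Ioi (0:ℝ)).indicator (fun ρ => ρ * HH G p.1 ρ) p.2 := by
    rw [Measure.volume_eq_prod, integral_prod]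
    · refine integral_congr_ae (Eventually.of_forall fun z => ?_)
      simp only
      rw [integral_indicator measurableSet_Ioi]
    have hm : Measurable fun p : ℝ × ℝ => (Ioi (0:ℝ)).indicator (fun ρ => ρ * HH G p.1 ρ) p.2 := by
      have : (fun p : ℝ × ℝ => (Ioi (0:ℝ)).indicator (fun ρ => ρ * HH G p.1 ρ) p.2) =
          (Prod.snd ⁻¹' Ioi (0:ℝ)).indicator fun p : ℝ × ℝ => p.2 * HH G p.1 p.2 := by
        funext p; simp only [indicator, mem_preimage]
      rw [this]
      exact (measurable_snd.mul hmeas).indicator (measurable_snd measurableSet_Ioi)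
    have : IntegrableOn (fun p : ℝ × ℝ => (Ioi (0:ℝ)).indicator (fun ρ => ρ * HH G p.1 ρ) p.2)
        (Icc (-1, -1) (1, 1)) := by
      refine Measure.integrableOn_of_bounded (M := M) isCompact_Icc.measure_lt_top.ne
        hm.aestronglyMeasurable ?_
      refine (ae_restrict_iff' measurableSet_Icc).2 (Eventually.of_forall fun p hp => ?_)
      have hM0 : 0 ≤ M := (abs_nonneg _).trans (hM 0 0)
      by_cases h : p.2 ∈ Ioi (0:ℝ)
      · rw [indicator_of_mem h, norm_mul, Real.norm_eq_abs, Real.norm_eq_abs]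
        have h2 : |p.2| ≤ 1 := abs_le.2 ⟨hp.1.2, hp.2.2⟩
        calc _ ≤ 1 * M := mul_le_mul h2 (hM _ _) (abs_nonneg _) zero_le_one
          _ = M := one_mul M
      · rw [indicator_of_notMem h]; simpa using hM0
    refine (integrableOn_iff_integrable_of_support_subset ?_).1 this
    intro p hp
    have h : HH G p.1 p.2 ≠ 0 := by
      intro h0
      apply hp
      by_cases h : p.2 ∈ Ioi (0:ℝ)
      · simp only [indicator_of_mem h, h0, mul_zero]
      · exact indicator_of_notMem h _
    have := abs_le_one_of_sq (HH_supp h)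
    simp only [abs_le] at this
    exact ⟨⟨this.2.1, this.1.1⟩, ⟨this.2.2, this.1.2⟩⟩
  -- step 4: polar coordinates in the half plane
  have h6 : ∫ p : ℝ × ℝ, (Ioi (0:ℝ)).indicator (fun ρ => ρ * HH G p.1 ρ) p.2 =
      (1 / 3) * ∫ z in (-1)..1, G z := by
    rw [← integral_comp_polarCoord_symm]
    have e : ∀ p ∈ polarCoord.target, p.1 • (Ioi (0:ℝ)).indicator
        (fun ρ => ρ * HH G (polarCoord.symm p).1 ρ) (polarCoord.symm p).2 =
        ((Iio (1:ℝ)).indicator (fun r => r ^ 2) p.1) *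
          ((Ioo 0 Real.pi).indicator (fun θ => Real.sin θ * G (Real.cos θ)) p.2) := by
      rintro ⟨r, θ⟩ ⟨hr, hθ⟩
      have hr : 0 < r := hr
      have hθ : θ ∈ Ioo (-Real.pi) Real.pi := hθ
      simp only [polarCoord_symm_apply, smul_eq_mul]
      by_cases h : θ ∈ Ioo 0 Real.pi
      · have hs := Real.sin_pos_of_mem_Ioo h
        have hrs : r * Real.sin θ ∈ Ioi (0:ℝ) := mul_pos hr hs
        rw [indicator_of_mem hrs, indicator_of_mem h]
        unfold HH
        have : (r * Real.sin θ) ^ 2 + (r * Real.cos θ) ^ 2 = r ^ 2 := by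
          linear_combination r ^ 2 * Real.sin_sq_add_cos_sq θ
        rw [this, Real.sqrt_sq hr.le, mul_div_cancel_left₀ _ hr.ne']
        by_cases h1 : r ∈ Iio (1:ℝ)
        · rw [indicator_of_mem h1, indicator_of_mem h1]; ring
        · rw [indicator_of_notMem h1, indicator_of_notMem h1]; ring
      · have hle : θ ≤ 0 := by
          by_contra hc
          exact h ⟨not_le.1 hc, hθ.2⟩
        have hs := Real.sin_nonpos_of_nonpos_of_neg_pi_le hle hθ.1.le
        have hrs : r * Real.sin θ ∉ Ioi (0:ℝ) := by
          rw [mem_Ioi, not_lt]; nlinarith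
        rw [indicator_of_notMem hrs, indicator_of_notMem h]; ring
    rw [setIntegral_congr_fun polarCoord.open_target.measurableSet e]
    rw [polarCoord_target, Measure.volume_eq_prod, setIntegral_prod_mul]
    have i1 : ∫ r in Ioi (0:ℝ), (Iio (1:ℝ)).indicator (fun r => r ^ 2) r = 1 / 3 := by
      rw [setIntegral_indicator measurableSet_Iio, Ioi_inter_Iio, ← integral_Ioc_eq_integral_Ioo,
        ← intervalIntegral.integral_of_le zero_le_one]
      norm_num
    have i2 : ∫ θ in Ioo (-Real.pi) Real.pi,
        (Ioo 0 Real.pi).indicator (fun θ => Real.sin θ * G (Real.cos θ)) θ =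
        ∫ z in (-1)..1, G z := by
      rw [setIntegral_indicator measurableSet_Ioo, inter_eq_right.2
        (Ioo_subset_Ioo_left (by linarith [Real.pi_pos])), ← integral_Ioc_eq_integral_Ioo,
        ← intervalIntegral.integral_of_le Real.pi_pos.le]
      have := intervalIntegral.integral_comp_mul_deriv (a := 0) (b := Real.pi)
        (f := Real.cos) (f' := fun x => -Real.sin x) (g := G)
        (fun x _ => Real.hasDerivAt_cos x) (by fun_prop) hG
      rw [Real.cos_zero, Real.cos_pi] at this
      have h7 : ∫ x in (0:ℝ)..Real.pi, Real.sin x * G (Real.cos x) =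
          -∫ x in (0:ℝ)..Real.pi, (G ∘ Real.cos) x * -Real.sin x := by
        rw [← intervalIntegral.integral_neg]
        refine intervalIntegral.integral_congr fun x _ => ?_
        simp only [Function.comp]; ring
      rw [h7, this, ← intervalIntegral.integral_symm]
    rw [i1, i2]
  simp only [h4] at h3
  rw [h3, integral_mul_const, h5, h6] at h1
  linarith

/-! ### Part 7: the pulled back form and the fundamental domain -/

lemma mk3_0 (x y z : ℝ) : mk3 x y z 0 = x := rfl
lemma mk3_1 (x y z : ℝ) : mk3 x y z 1 = y := rfl
lemma mk3_2 (x y z : ℝ) : mk3 x y z 2 = z := rfl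

lemma norm_E3 (v : E3) : ‖v‖ = √(v 0 ^ 2 + v 1 ^ 2 + v 2 ^ 2) := by
  rw [EuclideanSpace.norm_eq, Fin.sum_univ_three]; simp

lemma E3_ext {v w : E3} (h0 : v 0 = w 0) (h1 : v 1 = w 1) (h2 : v 2 = w 2) : v = w := by
  ext i
  fin_cases i
  · exact h0
  · exact h1
  · exact h2

/-- the profile of an invariant density -/
def prof (g : E3 → ℝ) (z : ℝ) : ℝ := g (mk3 (√(1 - z ^ 2)) 0 z)

lemma prof_cont {g : E3 → ℝ} (hg : Continuous g) : Continuous (prof g) := by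
  unfold prof mk3
  refine hg.comp ?_
  refine (PiLp.continuous_toLp 2 _).comp ?_
  refine continuous_pi fun i => ?_
  fin_cases i
  · simp; fun_prop
  · simp; fun_prop
  · simp; fun_prop

lemma prof_eq {g : E3 → ℝ}
    (hinv : ∀ A : Matrix (Fin 2) (Fin 2) ℝ, A * A.transpose = 1 →
      ∀ v : E3, ‖v‖ = 1 → g (act2 A v) = g v) {v : E3} (hv : ‖v‖ = 1) : g v = prof g (v 2) := by
  rw [norm_E3, Real.sqrt_eq_one] at hv
  unfold prof
  have h1 : 1 - v 2 ^ 2 = v 0 ^ 2 + v 1 ^ 2 := by linarith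
  rw [h1]
  set ρ := √(v 0 ^ 2 + v 1 ^ 2) with hρ
  have hρ2 : ρ ^ 2 = v 0 ^ 2 + v 1 ^ 2 := Real.sq_sqrt (by positivity)
  by_cases h0 : ρ = 0
  · rw [h0] at hρ2
    congr 1
    refine E3_ext ?_ ?_ ?_
    · rw [mk3_0, h0]; nlinarith [sq_nonneg (v 0), sq_nonneg (v 1)]
    · rw [mk3_1]; nlinarith [sq_nonneg (v 0), sq_nonneg (v 1)]
    · rw [mk3_2]
  · rw [← hinv !![v 0 / ρ, v 1 / ρ; -(v 1) / ρ, v 0 / ρ] ?_ v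
      (by rw [norm_E3, Real.sqrt_eq_one]; exact hv)]
    · congr 1
      refine E3_ext ?_ ?_ ?_
      · simp only [act2, mk3_0]
        simp
        field_simp
        linarith
      · simp only [act2, mk3_1]
        simp
        field_simp
        ring
      · simp only [act2, mk3_2]
    · ext i j
      fin_cases i <;> fin_cases j <;> simp [Matrix.mul_apply, Fin.sum_univ_two] <;> field_simp <;>
        linarith

section pull
variable {f₁ f₂ : ℝ → E3}

lemma deriv_coord {f : ℝ → E3} (hf : Differentiable ℝ f) (i : Fin 3) (s : ℝ) :
    deriv (fun s => f s i) s = deriv f s i := by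
  have := (EuclideanSpace.proj (𝕜 := ℝ) i : E3 →L[ℝ] ℝ).hasFDerivAt.comp_hasDerivAt s
    (hf s).hasDerivAt
  exact this.deriv

lemma pdv_diff (h1 : Differentiable ℝ f₁) (h2 : Differentiable ℝ f₂) (x : E2) :
    DifferentiableAt ℝ (fun x : E2 => f₂ (x 1) - f₁ (x 0)) x ∧
    pdv (fun x : E2 => f₂ (x 1) - f₁ (x 0)) 0 x = -deriv f₁ (x 0) ∧
    pdv (fun x : E2 => f₂ (x 1) - f₁ (x 0)) 1 x = deriv f₂ (x 1) := by
  have p := fun i : Fin 2 => (EuclideanSpace.proj (𝕜 := ℝ) i : E2 →L[ℝ] ℝ).hasFDerivAt (x := x)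
  have q1 : HasFDerivAt (fun x : E2 => f₂ (x 1)) _ x :=
    HasFDerivAt.comp x (h2 (x 1)).hasFDerivAt (p 1)
  have q2 : HasFDerivAt (fun x : E2 => f₁ (x 0)) _ x :=
    HasFDerivAt.comp x (h1 (x 0)).hasFDerivAt (p 0)
  have q := q1.sub q2
  refine ⟨q.differentiableAt, ?_, ?_⟩
  · unfold pdv
    have e : fderiv ℝ (fun x : E2 => f₂ (x 1) - f₁ (x 0)) x = _ := q.fderiv
    rw [e]
    simp
  · unfold pdv
    have e : fderiv ℝ (fun x : E2 => f₂ (x 1) - f₁ (x 0)) x = _ := q.fderiv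
    rw [e]
    simp

lemma form2_eq (h1 : Differentiable ℝ f₁) (h2 : Differentiable ℝ f₂)
    (hdisj : ∀ s t, f₁ s ≠ f₂ t) {g : E3 → ℝ}
    (hinv : ∀ A : Matrix (Fin 2) (Fin 2) ℝ, A * A.transpose = 1 →
      ∀ v : E3, ‖v‖ = 1 → g (act2 A v) = g v) (x : E2) :
    form2 g (fun x : E2 => unitv (f₂ (x 1) - f₁ (x 0))) x 0 1 =
      prof g (zz (fun i s => f₁ s i) (fun i t => f₂ t i) (x 0, x 1)) *
        JJ (fun i s => f₁ s i) (fun i t => f₂ t i) (x 0, x 1) := by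
  set U : E2 → E3 := fun x => f₂ (x 1) - f₁ (x 0) with hU
  obtain ⟨hd, e0, e1⟩ := pdv_diff h1 h2 x
  have hne : U x ≠ 0 := by
    intro h
    exact hdisj (x 0) (x 1) (sub_eq_zero.1 h).symm
  have hn : ‖U x‖ ≠ 0 := norm_ne_zero_iff.2 hne
  have hrr : rr (fun i s => f₁ s i) (fun i t => f₂ t i) (x 0, x 1) = ‖U x‖ := by
    rw [norm_E3]; rfl
  have hc : DifferentiableAt ℝ (fun x => ‖U x‖⁻¹) x := (hd.norm ℝ hne).inv hn
  have hpd : ∀ i, pdv (fun x => unitv (U x)) i x = ‖U x‖⁻¹ • pdv U i x +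
      (fderiv ℝ (fun x => ‖U x‖⁻¹) x (EuclideanSpace.single i 1)) • U x := by
    intro i
    unfold pdv unitv
    rw [fderiv_fun_smul hc hd]
    simp
    rfl
  have hunit : ‖unitv (U x)‖ = 1 := by
    unfold unitv
    rw [norm_smul, norm_inv, norm_norm, inv_mul_cancel₀ hn]
  unfold form2
  have hg : g (unitv (U x)) = prof g (zz (fun i s => f₁ s i) (fun i t => f₂ t i) (x 0, x 1)) := by
    rw [prof_eq hinv hunit]
    congr 1
    unfold zz
    rw [hrr, div_eq_inv_mul]
    rfl
  change g (unitv (U x)) * det3 (unitv (U x)) (pdv (fun x => unitv (U x)) 0 x)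
    (pdv (fun x => unitv (U x)) 1 x) = _
  rw [hg, hpd, hpd, e0, e1]
  congr 1
  unfold JJ
  rw [hrr]
  simp only [deriv_coord h1, deriv_coord h2]
  have hu : ∀ i, uu (fun i s => f₁ s i) (fun i t => f₂ t i) i (x 0, x 1) = U x i := fun i => rfl
  simp only [hu, det3, unitv, PiLp.add_apply, PiLp.smul_apply, PiLp.neg_apply, smul_eq_mul]
  field_simp
  ring
end pull

lemma int_E2 (H : ℝ × ℝ → ℝ) :
    ∫ x in sq01, H (x 0, x 1) = ∫ p in Ico (0:ℝ) 1 ×ˢ Ico (0:ℝ) 1, H p := by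
  have m1 := EuclideanSpace.volume_preserving_symm_measurableEquiv_toLp (Fin 2)
  have m2 := volume_preserving_finTwoArrow ℝ
  have := (m2.comp m1).setIntegral_preimage_emb
    ((MeasurableEquiv.measurableEmbedding _).comp (MeasurableEquiv.measurableEmbedding _)) H
    (Ico (0:ℝ) 1 ×ˢ Ico (0:ℝ) 1)
  rw [← this]
  rfl

lemma int_Icc_iter {F : ℝ × ℝ → ℝ} (hF : Continuous F) (s0 t0 : ℝ) :
    ∫ x in Icc (s0, t0) (s0 + 1, t0 + 1), F x =
      ∫ s in s0..(s0 + 1), ∫ t in t0..(t0 + 1), F (s, t) := by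
  rw [intervalIntegral.integral_of_le (by linarith), ← integral_Icc_eq_integral_Ioc,
    ← Icc_prod_Icc, Measure.volume_eq_prod, setIntegral_prod]
  · refine integral_congr_ae (Eventually.of_forall fun s => ?_)
    simp only
    rw [intervalIntegral.integral_of_le (by linarith), ← integral_Icc_eq_integral_Ioc]
  · rw [← Measure.volume_eq_prod]
    exact hF.continuousOn.integrableOn_compact (isCompact_Icc.prod isCompact_Icc)

lemma int_shift {F : ℝ × ℝ → ℝ} (hF : Continuous F) (p1 : ∀ s t, F (s + 1, t) = F (s, t))
    (p2 : ∀ s t, F (s, t + 1) = F (s, t)) (s0 t0 : ℝ) :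
    ∫ p in Ico (0:ℝ) 1 ×ˢ Ico (0:ℝ) 1, F p = ∫ x in Icc (s0, t0) (s0 + 1, t0 + 1), F x := by
  have e1 : ∫ p in Ico (0:ℝ) 1 ×ˢ Ico (0:ℝ) 1, F p = ∫ x in Icc ((0:ℝ), (0:ℝ)) (0 + 1, 0 + 1), F x := by
    rw [← Icc_prod_Icc, zero_add]
    refine setIntegral_congr_set ?_
    rw [Measure.volume_eq_prod]
    exact Measure.set_prod_ae_eq Ico_ae_eq_Icc Ico_ae_eq_Icc
  rw [e1, int_Icc_iter hF, int_Icc_iter hF]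
  have i1 : ∀ s, ∫ t in (0:ℝ)..(0 + 1), F (s, t) = ∫ t in t0..(t0 + 1), F (s, t) := fun s =>
    Function.Periodic.intervalIntegral_add_eq (f := fun t => F (s, t)) (fun t => p2 s t) 0 t0
  simp only [i1]
  exact Function.Periodic.intervalIntegral_add_eq (f := fun s => ∫ t in t0..(t0 + 1), F (s, t))
    (fun s => by simp only [p1]) 0 s0

/-! ### Part 8: assembly -/

lemma toIcoMod_per {α : Type*} {c : ℝ → α} (h : ∀ s, c (s + 1) = c s) (s0 s : ℝ) :
    c (toIcoMod one_pos s0 s) = c s := by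
  have hp : Function.Periodic c 1 := h
  have := hp.sub_zsmul_eq (x := s) (toIcoDiv one_pos s0 s)
  rwa [self_sub_toIcoDiv_zsmul] at this

lemma lkSum_shift {f₁ f₂ : ℝ → E3} (p1 : ∀ t, f₁ (t + 1) = f₁ t) (p2 : ∀ t, f₂ (t + 1) = f₂ t)
    (s0 t0 : ℝ) {Z : Finset (ℝ × ℝ)}
    (hZ : ∀ x, x ∈ Z ↔ x ∈ Ico s0 (s0 + 1) ×ˢ Ico t0 (t0 + 1) ∧
      pr12 (f₁ x.1) = pr12 (f₂ x.2) ∧ pr3 (f₁ x.1) < pr3 (f₂ x.2)) :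
    lkSum f₁ f₂ = ∑ p ∈ Z, Real.sign (cross2 (deriv f₂ p.2) (deriv f₁ p.1)) := by
  have d1 : ∀ t, deriv f₁ (t + 1) = deriv f₁ t := fun t => by
    rw [← deriv_comp_add_const]; congr 1; funext s; exact p1 s
  have d2 : ∀ t, deriv f₂ (t + 1) = deriv f₂ t := fun t => by
    rw [← deriv_comp_add_const]; congr 1; funext s; exact p2 s
  rw [← finsum_mem_coe_finset]
  unfold lkSum
  refine finsum_mem_eq_of_bijOn
    (fun p : ℝ × ℝ => (toIcoMod one_pos s0 p.1, toIcoMod one_pos t0 p.2)) ?_ ?_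
  · have back : ∀ s s0 : ℝ, s ∈ Ico (0:ℝ) 1 → toIcoMod one_pos 0 (toIcoMod one_pos s0 s) = s := by
      intro s s0 hs
      rw [toIcoMod_per (c := fun s => toIcoMod one_pos 0 s) (fun s => toIcoMod_add_right one_pos 0 s)]
      exact (toIcoMod_eq_self one_pos).2 (by simpa using hs)
    have forth : ∀ s s0 : ℝ, s ∈ Ico s0 (s0 + 1) →
        toIcoMod one_pos s0 (toIcoMod one_pos 0 s) = s := by
      intro s s0 hs
      rw [toIcoMod_per (c := fun s => toIcoMod one_pos s0 s)
        (fun s => toIcoMod_add_right one_pos s0 s)]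
      exact (toIcoMod_eq_self one_pos).2 hs
    refine ⟨?_, ?_, ?_⟩
    · rintro p ⟨h1, h2, h3, h4⟩
      rw [Finset.mem_coe, hZ]
      refine ⟨⟨toIcoMod_mem_Ico one_pos _ _, toIcoMod_mem_Ico one_pos _ _⟩, ?_⟩
      simp only [toIcoMod_per p1, toIcoMod_per p2]
      exact ⟨h3, h4⟩
    · rintro ⟨s, t⟩ ⟨h1, h2, -, -⟩ ⟨s', t'⟩ ⟨h1', h2', -, -⟩ h
      simp only [Prod.mk.injEq] at h h1 h2 h1' h2'
      rw [Prod.mk.injEq]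
      constructor
      · rw [← back s s0 h1, ← back s' s0 h1', h.1]
      · rw [← back t t0 h2, ← back t' t0 h2', h.2]
    · rintro ⟨s, t⟩ hst
      rw [Finset.mem_coe, hZ] at hst
      obtain ⟨⟨hs, ht⟩, h3, h4⟩ := hst
      refine ⟨(toIcoMod one_pos 0 s, toIcoMod one_pos 0 t), ?_, ?_⟩
      · refine ⟨by simpa using toIcoMod_mem_Ico one_pos (0:ℝ) s,
          by simpa using toIcoMod_mem_Ico one_pos (0:ℝ) t, ?_⟩
        simp only [toIcoMod_per p1, toIcoMod_per p2]
        exact ⟨h3, h4⟩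
      · simp only [forth s s0 hs, forth t t0 ht]
  · intro p _
    simp only [toIcoMod_per d1, toIcoMod_per d2]

theorem statement8_aux (f₁ f₂ : ℝ → E3) (h₁ : IsLoop f₁) (h₂ : IsLoop f₂)
    (hdisj : ∀ s t, f₁ s ≠ f₂ t) (hD : OnlyDouble2 ![f₁, f₂])
    (ε : ℝ) (g : E3 → ℝ) (hg : IsEtaForm ε g) :
    lkIntegral f₁ f₂ g = lkSum f₁ f₂ := by
  obtain ⟨c1, p1, -, -⟩ := h₁
  obtain ⟨c2, p2, -, -⟩ := h₂
  obtain ⟨gc, -, hinv, hIntg⟩ := hg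
  set a : Fin 3 → ℝ → ℝ := fun i s => f₁ s i with ha_def
  set b : Fin 3 → ℝ → ℝ := fun i t => f₂ t i with hb_def
  have df1 : Differentiable ℝ f₁ := c1.differentiable (by simp)
  have df2 : Differentiable ℝ f₂ := c2.differentiable (by simp)
  have ha : ∀ i, ContDiff ℝ (⊤ : ℕ∞) (a i) := fun i =>
    (EuclideanSpace.proj (𝕜 := ℝ) i : E3 →L[ℝ] ℝ).contDiff.comp c1
  have hb : ∀ i, ContDiff ℝ (⊤ : ℕ∞) (b i) := fun i =>
    (EuclideanSpace.proj (𝕜 := ℝ) i : E3 →L[ℝ] ℝ).contDiff.comp c2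
  have hpa : ∀ i s, a i (s + 1) = a i s := fun i s => by simp only [ha_def, p1]
  have hpb : ∀ i s, b i (s + 1) = b i s := fun i s => by simp only [hb_def, p2]
  have hne : ∀ x, ∃ i, uu a b i x ≠ 0 := by
    intro x
    by_contra h
    push Not at h
    apply hdisj x.1 x.2
    have h' : ∀ i, f₁ x.1 i = f₂ x.2 i := fun i => (sub_eq_zero.1 (h i)).symm
    exact E3_ext (h' 0) (h' 1) (h' 2)
  have hrho : ∀ x, rho2 a b x = 0 ↔ pr12 (f₁ x.1) = pr12 (f₂ x.2) := by
    intro x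
    rw [← WW_zero, WW, pr12, pr12, Prod.mk_eq_zero, Prod.mk.injEq]
    simp only [uu, ha_def, hb_def, sub_eq_zero]
    exact ⟨fun h => ⟨h.1.symm, h.2.symm⟩, fun h => ⟨h.1.symm, h.2.symm⟩⟩
  have hddc : ∀ x, dd a b x = cross2 (deriv f₂ x.2) (deriv f₁ x.1) := by
    intro x
    simp only [dd, ha_def, hb_def, deriv_coord df1, deriv_coord df2, cross2]
  have htr : ∀ x, rho2 a b x = 0 → dd a b x ≠ 0 := by
    intro x hx h0
    have h1 := hD.1 0 1 x.1 x.2 (hdisj _ _) ((hrho x).1 hx)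
    apply h1
    rw [hddc] at h0
    simp only [Matrix.cons_val_zero, Matrix.cons_val_one]
    unfold cross2 at h0 ⊢
    linarith
  have hG : Continuous (prof g) := prof_cont gc.continuous
  obtain ⟨s0, t0, Z, hZ, hI⟩ := gauss_count ha hb hne hpa hpb htr hG
  have harch : 2 * Real.pi * ∫ z in (-1)..1, prof g z = 1 := by
    rw [← archimedes hG]
    refine Eq.trans ?_ hIntg
    refine integral_congr_ae (Eventually.of_forall fun v => ?_)
    exact (prof_eq hinv (by simpa using v.2)).symm
  rw [harch, one_mul] at hI
  have hF : Continuous fun x => prof g (zz a b x) * JJ a b x :=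
    (hG.comp (zz_contDiff ha hb hne).continuous).mul (JJ_cont ha hb hne)
  unfold lkIntegral
  simp only [form2_eq df1 df2 hdisj hinv]
  have hE := int_E2 (fun x => prof g (zz a b x) * JJ a b x)
  simp only at hE
  rw [hE, int_shift hF ?_ ?_ s0 t0, hI, lkSum_shift p1 p2 s0 t0 (Z := Z)]
  · exact Finset.sum_congr rfl fun p _ => by rw [hddc]
  · intro x
    rw [hZ, hrho]
    have : 0 < uu a b 2 x ↔ pr3 (f₁ x.1) < pr3 (f₂ x.2) := sub_pos
    rw [this]
  · intro s t
    simp only [zz, rr, JJ, uu, hpa, deriv_per (hpa _)]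
  · intro s t
    simp only [zz, rr, JJ, uu, hpb, deriv_per (hpb _)]

/-- the linking number of a 2-component link as a localized
configuration space integral. Let `(f₁, f₂)` be a smooth 2-component link of circles
(parametrized with period 1) whose diagram has only transverse double crossings. Then
for every `ε > 0` and every 2-form `η` as specified, `∫_{S¹×S¹} h*η` equals the linking
number `lk(f₁, f₂)` — the mapping degree of `h`, i.e. the sum of the signs of those
crossings of the diagram at which `f₂` passes over `f₁`. -/
theorem statement8 (f₁ f₂ : ℝ → E3) (h₁ : IsLoop f₁) (h₂ : IsLoop f₂)
    (hdisj : ∀ s t, f₁ s ≠ f₂ t) (hD : OnlyDouble2 ![f₁, f₂])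
    (ε : ℝ) (hε : 0 < ε) (g : E3 → ℝ) (hg : IsEtaForm ε g) :
    lkIntegral f₁ f₂ g = lkSum f₁ f₂ :=
  statement8_aux f₁ f₂ h₁ h₂ hdisj hD ε g hg
end
end

section
/- Let f = f₁ ⊔ f₂ ⊔ f₃ be a 3-component long link and let D be a diagram of f all of whose crossings are transverse double points (in particular D has no triple points). Then for all sufficiently small ε > 0 the integrand of I_𝒴(f) vanishes identically, so I_𝒴(f) = 0; in particular lim_{ε→0} I_𝒴(f) = 0. -/
open MeasureTheory Filter Topology Set

noncomputable section

lemma abs_coord_le (v : E3) (i : Fin 3) : |v i| ≤ ‖v‖ := by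
  simpa [Real.norm_eq_abs] using PiLp.norm_apply_le v i

lemma norm_unitv {v : E3} (hv : v ≠ 0) : ‖unitv v‖ = 1 := by
  have : ‖v‖ ≠ 0 := norm_ne_zero_iff.mpr hv
  simp [unitv, norm_smul, this]

/-- A vector whose direction is `ε`-close to `N` lies in a thin cone around `N`. -/
lemma cone_of_near {ε : ℝ} (h2 : ε ≤ 1 / 2) {v : E3} (hv : v ≠ 0)
    (h : ‖unitv v - NP‖ < ε) :
    0 < v 2 ∧ |v 0| ≤ 2 * ε * v 2 ∧ |v 1| ≤ 2 * ε * v 2 := by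
  have hn : 0 < ‖v‖ := norm_pos_iff.mpr hv
  have c0 := (abs_coord_le (unitv v - NP) 0).trans_lt h
  have c1 := (abs_coord_le (unitv v - NP) 1).trans_lt h
  have c2 := (abs_coord_le (unitv v - NP) 2).trans_lt h
  have e (i : Fin 3) : v i = ‖v‖ * unitv v i := by
    simp only [unitv, PiLp.smul_apply, smul_eq_mul]
    field_simp
  have n0 : NP 0 = 0 := by simp [NP, mk3]
  have n1 : NP 1 = 0 := by simp [NP, mk3]
  have n2 : NP 2 = 1 := by simp [NP, mk3]
  simp only [PiLp.sub_apply, n0, n1, n2, sub_zero] at c0 c1 c2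
  have w2 : 1 / 2 < unitv v 2 := by
    have := (abs_lt.mp c2).1
    linarith
  have hε : 0 < ε := (norm_nonneg _).trans_lt h
  have key (a : ℝ) (ha : |a| < ε) : |‖v‖ * a| ≤ 2 * ε * (‖v‖ * unitv v 2) := by
    rw [abs_mul, abs_of_pos hn]
    have : |a| ≤ 2 * ε * unitv v 2 := by nlinarith
    calc ‖v‖ * |a| ≤ ‖v‖ * (2 * ε * unitv v 2) := by gcongr
      _ = _ := by ring
  refine ⟨?_, ?_, ?_⟩
  · rw [e 2]; positivity
  · rw [e 0, e 2]; exact key _ c0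
  · rw [e 1, e 2]; exact key _ c1

/-- Coordinates of the link are bounded on the compact part. -/
lemma link_bound (f : Fin 3 → ℝ → E3) (hf : IsLongLink3 f) :
    ∃ B : ℝ, 1 ≤ B ∧ ∀ i x, |x| ≤ 1 → ∀ j, |f i x j| ≤ B := by
  have h (i : Fin 3) : ∃ B : ℝ, ∀ x ∈ Icc (-1 : ℝ) 1, ‖f i x‖ ≤ B :=
    isCompact_Icc.exists_bound_of_continuousOn (hf.1 i).continuous.continuousOn
  choose B hB using h
  refine ⟨1 + ∑ i, |B i|, ?_, ?_⟩
  · have : 0 ≤ ∑ i, |B i| := Finset.sum_nonneg fun i _ => abs_nonneg _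
    linarith
  · intro i x hx j
    have h1 := (abs_coord_le (f i x) j).trans (hB i x (abs_le.mp hx))
    have h2 : |B i| ≤ ∑ i, |B i| :=
      Finset.single_le_sum (f := fun i => |B i|) (fun i _ => abs_nonneg _) (Finset.mem_univ i)
    have h3 := le_abs_self (B i)
    linarith

/-- The defect of a triple of parameters from being a triple point of the diagram. -/
def tripleDefect (f : Fin 3 → ℝ → E3) (p : ℝ × ℝ × ℝ) : ℝ :=
  |f 1 p.2.1 0 - f 0 p.1 0| + |f 1 p.2.1 1 - f 0 p.1 1| +
    |f 1 p.2.1 0 - f 2 p.2.2 0| + |f 1 p.2.1 1 - f 2 p.2.2 1|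

lemma tripleDefect_pos (f : Fin 3 → ℝ → E3) (hD : OnlyDoubleL f) (p : ℝ × ℝ × ℝ) :
    0 < tripleDefect f p := by
  have h0 : 0 ≤ tripleDefect f p := by unfold tripleDefect; positivity
  refine lt_of_le_of_ne h0 fun h => ?_
  unfold tripleDefect at h
  have a1 := abs_nonneg (f 1 p.2.1 0 - f 0 p.1 0)
  have a2 := abs_nonneg (f 1 p.2.1 1 - f 0 p.1 1)
  have a3 := abs_nonneg (f 1 p.2.1 0 - f 2 p.2.2 0)
  have a4 := abs_nonneg (f 1 p.2.1 1 - f 2 p.2.2 1)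
  have b1 := abs_eq_zero.mp (by linarith : |f 1 p.2.1 0 - f 0 p.1 0| = 0)
  have b2 := abs_eq_zero.mp (by linarith : |f 1 p.2.1 1 - f 0 p.1 1| = 0)
  have b3 := abs_eq_zero.mp (by linarith : |f 1 p.2.1 0 - f 2 p.2.2 0| = 0)
  have b4 := abs_eq_zero.mp (by linarith : |f 1 p.2.1 1 - f 2 p.2.2 1| = 0)
  refine hD.2 0 1 2 p.1 p.2.1 p.2.2 (by simp) (by simp) (by simp) ?_ ?_
  · simp only [pr12, Prod.mk.injEq]; constructor <;> linarith
  · simp only [pr12, Prod.mk.injEq]; constructor <;> linarith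

lemma tripleDefect_continuous (f : Fin 3 → ℝ → E3) (hf : IsLongLink3 f) :
    Continuous (tripleDefect f) := by
  have h (i j : Fin 3) : Continuous fun x => f i x j :=
    (EuclideanSpace.proj (𝕜 := ℝ) j).continuous.comp (hf.1 i).continuous
  have e0 (j : Fin 3) : Continuous fun p : ℝ × ℝ × ℝ => f 0 p.1 j :=
    (h 0 j).comp continuous_fst
  have e1 (j : Fin 3) : Continuous fun p : ℝ × ℝ × ℝ => f 1 p.2.1 j :=
    (h 1 j).comp (continuous_fst.comp continuous_snd)
  have e2 (j : Fin 3) : Continuous fun p : ℝ × ℝ × ℝ => f 2 p.2.2 j :=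
    (h 2 j).comp (continuous_snd.comp continuous_snd)
  exact ((((e1 0).sub (e0 0)).abs.add ((e1 1).sub (e0 1)).abs).add
    ((e1 0).sub (e2 0)).abs).add ((e1 1).sub (e2 1)).abs

/-- For small `ε`, no configuration has all three directions `ε`-close to `N`. -/
lemma no_near_config (f : Fin 3 → ℝ → E3) (hf : IsLongLink3 f) (hD : OnlyDoubleL f) :
    ∃ ε₀ > (0 : ℝ), ∀ ε : ℝ, ε < ε₀ → ∀ (s t u : ℝ) (p : E3),
      p ≠ f 0 s → p ≠ f 1 t → p ≠ f 2 u →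
      ‖unitv (p - f 0 s) - NP‖ < ε → ‖unitv (f 1 t - p) - NP‖ < ε →
      ‖unitv (p - f 2 u) - NP‖ < ε → False := by
  obtain ⟨B, hB1, hB⟩ := link_bound f hf
  have hK : IsCompact (Icc (-(5 * B)) (5 * B) ×ˢ
      (Icc (-(5 * B)) (5 * B) ×ˢ Icc (-(5 * B)) (5 * B)) : Set (ℝ × ℝ × ℝ)) :=
    isCompact_Icc.prod (isCompact_Icc.prod isCompact_Icc)
  have hne : (Icc (-(5 * B)) (5 * B) ×ˢ
      (Icc (-(5 * B)) (5 * B) ×ˢ Icc (-(5 * B)) (5 * B)) : Set (ℝ × ℝ × ℝ)).Nonempty := by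
    refine ⟨(0, 0, 0), ?_⟩
    simp only [mem_prod, mem_Icc]
    refine ⟨⟨?_, ?_⟩, ⟨?_, ?_⟩, ?_, ?_⟩ <;> linarith
  obtain ⟨q, -, hq⟩ := hK.exists_isMinOn hne (tripleDefect_continuous f hf).continuousOn
  have hδ := tripleDefect_pos f hD q
  set δ := tripleDefect f q with hδdef
  refine ⟨min (1 / 2) (δ / (16 * B)), by positivity, ?_⟩
  intro ε hε s t u p hs ht hu h1 h2 h3
  have hε2 : ε ≤ 1 / 2 := (hε.trans_le (min_le_left _ _)).le
  have hεδ : 16 * B * ε < δ := by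
    have := hε.trans_le (min_le_right _ _)
    rw [lt_div_iff₀ (by positivity)] at this
    linarith
  have hε0 : 0 < ε := (norm_nonneg _).trans_lt h1
  obtain ⟨x1, y1, z1⟩ := cone_of_near hε2 (sub_ne_zero.mpr hs) h1
  obtain ⟨x2, y2, z2⟩ := cone_of_near hε2 (sub_ne_zero.mpr ht.symm) h2
  obtain ⟨x3, y3, z3⟩ := cone_of_near hε2 (sub_ne_zero.mpr hu) h3
  simp only [PiLp.sub_apply] at x1 y1 z1 x2 y2 z2 x3 y3 z3
  have far2 (i : Fin 3) (x : ℝ) (hx : 1 ≤ |x|) : f i x 2 = 0 := by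
    rw [hf.2.2.2 i x hx]; simp [mk3]
  have far0 (i : Fin 3) (x : ℝ) (hx : 1 ≤ |x|) : f i x 0 = x := by
    rw [hf.2.2.2 i x hx]; simp [mk3]
  have ht2 (i : Fin 3) (x : ℝ) : |f i x 2| ≤ B := by
    rcases le_total |x| 1 with h | h
    · exact hB i x h 2
    · rw [far2 i x h]; simp; linarith
  have bd (i : Fin 3) (x c : ℝ) (hc : 1 ≤ c) (h : |f i x 0| ≤ c) : |x| ≤ c := by
    rcases le_total |x| 1 with h' | h'
    · linarith
    · rwa [far0 i x h'] at h
  have H0 := abs_le.mp (ht2 0 s)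
  have H1 := abs_le.mp (ht2 1 t)
  have H2 := abs_le.mp (ht2 2 u)
  have mono (k : ℝ) (h : k ≤ 2 * B) : 2 * ε * k ≤ 4 * B * ε := by nlinarith
  have comb (a b c k l : ℝ) (hab : |a - b| ≤ 2 * ε * k) (hbc : |c - a| ≤ 2 * ε * l)
      (hkl : k + l ≤ 2 * B) : |c - b| ≤ 4 * B * ε := by
    have h1 := abs_sub_le c a b
    have h2 := mono _ hkl
    linarith
  have A0 := comb _ _ _ _ _ y1 y2 (by linarith)
  have A1 := comb _ _ _ _ _ z1 z2 (by linarith)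
  have C0 := comb _ _ _ _ _ y3 y2 (by linarith)
  have C1 := comb _ _ _ _ _ z3 z2 (by linarith)
  have hBε : 4 * B * ε ≤ 2 * B := by nlinarith
  have hst : |s| ≤ 1 ∨ |t| ≤ 1 := by
    by_contra! hcon
    have e1 := far2 0 s hcon.1.le
    have e2 := far2 1 t hcon.2.le
    linarith
  have A0' := abs_le.mp A0
  have C0' := abs_le.mp C0
  have T : |f 1 t 0| ≤ 3 * B := by
    rcases hst with h | h
    · have := abs_le.mp (hB 0 s h 0)
      rw [abs_le]; constructor <;> linarith
    · have := hB 1 t h 0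
      linarith
  have T' := abs_le.mp T
  have S : |f 0 s 0| ≤ 5 * B := by rw [abs_le]; constructor <;> linarith
  have U : |f 2 u 0| ≤ 5 * B := by rw [abs_le]; constructor <;> linarith
  have hmin := hq (show (s, t, u) ∈ _ from
    ⟨abs_le.mp (bd 0 s _ (by linarith) S),
      abs_le.mp (bd 1 t _ (by linarith) (T.trans (by linarith))),
      abs_le.mp (bd 2 u _ (by linarith) U)⟩)
  have hmin' : δ ≤ tripleDefect f (s, t, u) := hmin
  simp only [tripleDefect] at hmin'
  linarith

lemma wedge222_eq_zero (g : E3 → ℝ) (h k l : E6 → E3) (x : E6)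
    (H : g (h x) = 0 ∨ g (k x) = 0 ∨ g (l x) = 0) : wedge222 g h k l x = 0 := by
  unfold wedge222 form2
  rcases H with H | H | H <;> simp [H]

lemma vanishing (f : Fin 3 → ℝ → E3) (hf : IsLongLink3 f) (hD : OnlyDoubleL f) :
    ∃ ε₀ > (0 : ℝ), ∀ ε : ℝ, 0 < ε → ε < ε₀ → ∀ g : E3 → ℝ, IsEtaForm ε g →
      (∀ x ∈ CYL f, omegaYL f g x = 0) ∧ ILY f g = 0 := by
  obtain ⟨ε₀, h0, H⟩ := no_near_config f hf hD
  refine ⟨ε₀, h0, fun ε _ hε g hg => ?_⟩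
  have key : ∀ x ∈ CYL f, omegaYL f g x = 0 := by
    rintro x ⟨hx0, hx1, hx2⟩
    apply wedge222_eq_zero
    by_contra! hc
    exact H ε hε (x 0) (x 1) (x 2) (ptY x) hx0 hx1 hx2
      (hg.2.1 _ (norm_unitv (sub_ne_zero.mpr hx0)) hc.1)
      (hg.2.1 _ (norm_unitv (sub_ne_zero.mpr hx1.symm)) hc.2.1)
      (hg.2.1 _ (norm_unitv (sub_ne_zero.mpr hx2)) hc.2.2)
  exact ⟨key, setIntegral_eq_zero_of_forall_eq_zero key⟩

/-- vanishing of the `𝒴`-integral for diagrams without triple points.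
Let `f` be a 3-component long link whose diagram has only transverse double crossings
(in particular no triple points). Then for all sufficiently small `ε > 0` the integrand
of `I_𝒴(f)` vanishes identically, so `I_𝒴(f) = 0`; in particular
`lim_{ε→0} I_𝒴(f) = 0` for every family `ε ↦ η_ε` of 2-forms as specified. -/
theorem statement10 (f : Fin 3 → ℝ → E3) (hf : IsLongLink3 f) (hD : OnlyDoubleL f) :
    (∃ ε₀ > (0 : ℝ), ∀ ε : ℝ, 0 < ε → ε < ε₀ → ∀ g : E3 → ℝ, IsEtaForm ε g →
      (∀ x ∈ CYL f, omegaYL f g x = 0) ∧ ILY f g = 0) ∧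
    ∀ G : ℝ → E3 → ℝ, (∀ ε : ℝ, 0 < ε → IsEtaForm ε (G ε)) →
      Tendsto (fun ε => ILY f (G ε)) (𝓝[>] 0) (𝓝 0) := by
  refine ⟨vanishing f hf hD, fun G hG => ?_⟩
  obtain ⟨ε₀, h0, H⟩ := vanishing f hf hD
  refine tendsto_const_nhds.congr' ?_
  filter_upwards [Ioo_mem_nhdsGT h0] with ε hε
  exact (H ε hε.1 hε.2 (G ε) (hG ε hε.1)).2.symm
end
end
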